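/- Let m, n ≥ 1, let Λ : 𝓢(ℝ^n) → 𝓢'(ℝ^m) be a continuous linear map into the space of tempered distributions, let s ∈ (0,1), let φ be a mollifier on ℝ^m and ψ a mollifier on ℝ^n. For ε ∈ (0,1] and y ∈ ℝ^n let ψ_{ε,y} ∈ 𝓢(ℝ^n) be given by ψ_{ε,y}(v) = ψ_ε(y−v), and define H_ε : ℝ^{m+n} → ℂ by H_ε(x,y) = ∫_{ℝ^m} (Λ(ψ_{ε,y}) ∗ φ_{ε^s})(x−u) φ_ε(u) du, where (Λ(g) ∗ φ_{ε^s})(ξ) = Λ(g)(w ↦ φ_{ε^s}(ξ−w)). Then the net (H_ε)_{ε∈(0,1]} belongs to E_τ(ℝ^{m+n}), and for every f ∈ 𝓢(ℝ^n), every g ∈ 𝓢(ℝ^m) and every p ∈ ℕ: Λ(f)(g) − ∫_{ℝ^m} ( ∫_{ℝ^n} H_ε(x,y) f(y) dy ) g(x) dx = O(ε^p) as ε → 0. That is, Λ(f) and the generalized integral operator with kernel (H_ε) applied to f are equal in the generalized distribution sense; in particular x ↦ ∫ H_ε(x,y) f(y) dy converges to Λ(f) in 𝓢'(ℝ^m)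 as ε → 0. -/

import Mathlib

open MeasureTheory Filter

noncomputable def mu {E : Type*} [NormedAddCommGroup E] [NormedSpace ℝ E]
    (r : ℤ) (l : ℕ) (f : E → ℂ) : ENNReal :=
  ⨆ (x : E) (i : ℕ) (_ : i ≤ l),
    ENNReal.ofReal ((1 + ‖x‖) ^ r * ‖iteratedFDeriv ℝ i f x‖)

def IsOEps (g : ℝ → ENNReal) (h : ℝ → ℝ) : Prop :=
  ∃ C > (0:ℝ), ∃ η > (0:ℝ), ∀ ε : ℝ, 0 < ε → ε ≤ η → g ε ≤ ENNReal.ofReal (C * h ε)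

def SchwartzLike {E : Type*} [NormedAddCommGroup E] [NormedSpace ℝ E] (f : E → ℂ) : Prop :=
  ContDiff ℝ (⊤ : ℕ∞) f ∧ ∀ q l : ℕ, mu (q : ℤ) l f < ⊤

def TemperateGrowth' {E : Type*} [NormedAddCommGroup E] [NormedSpace ℝ E] (f : E → ℂ) : Prop :=
  ContDiff ℝ (⊤ : ℕ∞) f ∧ ∀ l : ℕ, ∃ q : ℕ, mu (-(q:ℤ)) l f < ⊤

def IsESNet {E : Type*} [NormedAddCommGroup E] [NormedSpace ℝ E] (f : ℝ → E → ℂ) : Prop :=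
  (∀ ε ∈ Set.Ioc (0:ℝ) 1, SchwartzLike (f ε)) ∧
  ∀ q l : ℕ, ∃ N : ℕ, IsOEps (fun ε => mu (q:ℤ) l (f ε)) (fun ε => ε ^ (-(N:ℤ)))

def IsNSNet {E : Type*} [NormedAddCommGroup E] [NormedSpace ℝ E] (f : ℝ → E → ℂ) : Prop :=
  (∀ ε ∈ Set.Ioc (0:ℝ) 1, SchwartzLike (f ε)) ∧
  ∀ q l p : ℕ, IsOEps (fun ε => mu (q:ℤ) l (f ε)) (fun ε => ε ^ p)

def IsEtauNet {E : Type*} [NormedAddCommGroup E] [NormedSpace ℝ E] (f : ℝ → E → ℂ) : Prop :=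
  (∀ ε ∈ Set.Ioc (0:ℝ) 1, TemperateGrowth' (f ε)) ∧
  ∀ l : ℕ, ∃ q N : ℕ, IsOEps (fun ε => mu (-(q:ℤ)) l (f ε)) (fun ε => ε ^ (-(N:ℤ)))

def IsNtauNet {E : Type*} [NormedAddCommGroup E] [NormedSpace ℝ E] (f : ℝ → E → ℂ) : Prop :=
  (∀ ε ∈ Set.Ioc (0:ℝ) 1, TemperateGrowth' (f ε)) ∧
  ∀ l : ℕ, ∃ q : ℕ, ∀ p : ℕ, IsOEps (fun ε => mu (-(q:ℤ)) l (f ε)) (fun ε => ε ^ p)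

noncomputable def scaled {d : ℕ} (ρ : (Fin d → ℝ) → ℂ) (t : ℝ) (x : Fin d → ℝ) : ℂ :=
  ((t ^ (-(d:ℤ)) : ℝ) : ℂ) * ρ (t⁻¹ • x)

def IsMollifier {d : ℕ} (ρ : SchwartzMap (Fin d → ℝ) ℂ) : Prop :=
  (∫ x : Fin d → ℝ, ρ x) = 1 ∧
  ∀ α : Fin d → ℕ, α ≠ 0 → (∫ x : Fin d → ℝ, (∏ j, (x j : ℂ) ^ (α j)) * ρ x) = 0

def MemLa (a : ℝ) (N : ℕ → ℝ) : Prop :=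
  (∀ l, 0 ≤ N l) ∧
  ((a = 0 ∧ Filter.Tendsto (fun l : ℕ => N l / (l:ℝ)) Filter.atTop (nhds 0)) ∨
   (0 < a ∧ Filter.limsup (fun l : ℕ => N l / (l:ℝ)) Filter.atTop < a))

def IsESLNet {E : Type*} [NormedAddCommGroup E] [NormedSpace ℝ E]
    (a : ℝ) (f : ℝ → E → ℂ) : Prop :=
  (∀ ε ∈ Set.Ioc (0:ℝ) 1, SchwartzLike (f ε)) ∧
  ∃ N : ℕ → ℝ, MemLa a N ∧
    ∀ q l : ℕ, IsOEps (fun ε => mu (q:ℤ) l (f ε)) (fun ε => ε ^ (-(N l)))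

def IsEtauLNet {E : Type*} [NormedAddCommGroup E] [NormedSpace ℝ E]
    (c : ℝ) (f : ℝ → E → ℂ) : Prop :=
  (∀ ε ∈ Set.Ioc (0:ℝ) 1, TemperateGrowth' (f ε)) ∧
  ∃ N : ℕ → ℝ, MemLa c N ∧ ∃ q : ℕ, ∀ l : ℕ,
    IsOEps (fun ε => mu (-(q:ℤ)) l (f ε)) (fun ε => ε ^ (-(N l)))

def IsESinfNet {E : Type*} [NormedAddCommGroup E] [NormedSpace ℝ E] (f : ℝ → E → ℂ) : Prop :=
  (∀ ε ∈ Set.Ioc (0:ℝ) 1, SchwartzLike (f ε)) ∧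
  ∃ N : ℕ, ∀ q l : ℕ, IsOEps (fun ε => mu (q:ℤ) l (f ε)) (fun ε => ε ^ (-(N:ℤ)))

def ModerateNetMaps (m n : ℕ)
    (L : ℝ → SchwartzMap (Fin n → ℝ) ℂ → ((Fin m → ℝ) → ℂ)) : Prop :=
  (∀ ε ∈ Set.Ioc (0:ℝ) 1, ∀ f, TemperateGrowth' (L ε f)) ∧
  ∀ l : ℕ, ∃ C : ℝ → ℝ, (∀ ε, 0 ≤ C ε) ∧
    (∃ N : ℕ, ∃ C₀ > (0:ℝ), ∃ η > (0:ℝ), ∀ ε : ℝ, 0 < ε → ε ≤ η → C ε ≤ C₀ * ε ^ (-(N:ℤ))) ∧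
    ∃ p q l' : ℕ, ∃ η > (0:ℝ), ∀ ε : ℝ, 0 < ε → ε ≤ η →
      ∀ f : SchwartzMap (Fin n → ℝ) ℂ,
        mu (-(p:ℤ)) l (L ε f) ≤ ENNReal.ofReal (C ε) * mu (q:ℤ) l' ⇑f

def NegligibleNetMaps (m n : ℕ)
    (L : ℝ → SchwartzMap (Fin n → ℝ) ℂ → ((Fin m → ℝ) → ℂ)) : Prop :=
  (∀ ε ∈ Set.Ioc (0:ℝ) 1, ∀ f, TemperateGrowth' (L ε f)) ∧
  ∀ l : ℕ, ∃ C : ℝ → ℝ, (∀ ε, 0 ≤ C ε) ∧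
    (∀ p' : ℕ, ∃ C₀ > (0:ℝ), ∃ η > (0:ℝ), ∀ ε : ℝ, 0 < ε → ε ≤ η → C ε ≤ C₀ * ε ^ p') ∧
    ∃ p q l' : ℕ, ∃ η > (0:ℝ), ∀ ε : ℝ, 0 < ε → ε ≤ η →
      ∀ f : SchwartzMap (Fin n → ℝ) ℂ,
        mu (-(p:ℤ)) l (L ε f) ≤ ENNReal.ofReal (C ε) * mu (q:ℤ) l' ⇑f

def StronglyModerateWith (m n : ℕ)
    (L : ℝ → SchwartzMap (Fin n → ℝ) ℂ → ((Fin m → ℝ) → ℂ))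
    (lam : ℕ → ℕ) (r : ℕ → ℝ) : Prop :=
  (∀ ε ∈ Set.Ioc (0:ℝ) 1, ∀ f, TemperateGrowth' (L ε f)) ∧
  (∀ l, 0 ≤ r l) ∧
  ∀ l : ℕ, ∃ C ≥ (0:ℝ), ∃ p q : ℕ, ∃ η > (0:ℝ), ∀ ε : ℝ, 0 < ε → ε ≤ η →
    ∀ f : SchwartzMap (Fin n → ℝ) ℂ,
      mu (-(p:ℤ)) l (L ε f) ≤ ENNReal.ofReal (C * ε ^ (-(r l))) * mu (q:ℤ) (lam l) ⇑f

def ContinuousIntoOM (m n : ℕ) (L : SchwartzMap (Fin n → ℝ) ℂ → ((Fin m → ℝ) → ℂ)) : Prop :=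
  ∀ l : ℕ, ∃ C ≥ (0:ℝ), ∃ p q l' : ℕ, ∀ f,
    mu (-(p:ℤ)) l (L f) ≤ ENNReal.ofReal C * mu (q:ℤ) l' ⇑f

noncomputable def muOn {d : ℕ} (Ω : Set (Fin d → ℝ)) (r : ℤ) (l : ℕ)
    (f : (Fin d → ℝ) → ℂ) : ENNReal :=
  ⨆ (x : Ω) (i : ℕ) (_ : i ≤ l),
    ENNReal.ofReal ((1 + ‖(x : Fin d → ℝ)‖) ^ r * ‖iteratedFDerivWithin ℝ i f Ω (x : Fin d → ℝ)‖)

def IsBox {d : ℕ} (Ω : Set (Fin d → ℝ)) : Prop :=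
  ∃ I : Fin d → Set ℝ, (∀ j, IsOpen (I j) ∧ Convex ℝ (I j)) ∧ Ω = Set.univ.pi I

def IsRegularSet (R : Set (ℕ → ℝ)) : Prop :=
  R.Nonempty ∧ (∀ N ∈ R, ∀ n, 0 ≤ N n) ∧
  (∀ N ∈ R, ∀ k : ℕ, ∃ N' ∈ R, ∀ n, N n + k ≤ N' n) ∧
  (∀ N₁ ∈ R, ∀ N₂ ∈ R, ∃ N ∈ R, ∀ n, max (N₁ n) (N₂ n) ≤ N n) ∧
  (∀ N₁ ∈ R, ∀ N₂ ∈ R, ∃ N ∈ R, ∀ l₁ l₂ : ℕ, N₁ l₁ + N₂ l₂ ≤ N (l₁ + l₂))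

def IsESRNet {E : Type*} [NormedAddCommGroup E] [NormedSpace ℝ E]
    (R : Set (ℕ → ℝ)) (f : ℝ → E → ℂ) : Prop :=
  (∀ ε ∈ Set.Ioc (0:ℝ) 1, SchwartzLike (f ε)) ∧
  ∃ N ∈ R, ∀ q l : ℕ, IsOEps (fun ε => mu (q:ℤ) l (f ε)) (fun ε => ε ^ (-(N l)))

def IsEtauRNet {E : Type*} [NormedAddCommGroup E] [NormedSpace ℝ E]
    (R : Set (ℕ → ℝ)) (f : ℝ → E → ℂ) : Prop :=
  (∀ ε ∈ Set.Ioc (0:ℝ) 1, TemperateGrowth' (f ε)) ∧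
  ∃ N ∈ R, ∃ q : ℕ, ∀ l : ℕ,
    IsOEps (fun ε => mu (-(q:ℤ)) l (f ε)) (fun ε => ε ^ (-(N l)))

noncomputable def pderiv' {d : ℕ} (j : Fin d) (f : (Fin d → ℝ) → ℂ) : (Fin d → ℝ) → ℂ :=
  fun x => fderiv ℝ f x (Pi.single j 1)

noncomputable def multiDeriv {d : ℕ} : List (Fin d) → ((Fin d → ℝ) → ℂ) → ((Fin d → ℝ) → ℂ)
  | [], f => f
  | j :: js, f => pderiv' j (multiDeriv js f)

/-!
Averaging commutes with continuous functionals, so the kernel is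
`H_ε(x, y) = Λ (τ_y ψ̌_ε) (τ_x γ_ε)`, where `τ` denotes translation, `ψ̌_ε(v) = ψ_ε(-v)`, and `γ_ε`
is `w ↦ φ_ε(-w)` averaged by the reflected `φ_{ε^s}`. By a uniform boundedness argument, the
separately continuous form `(f, g) ↦ Λ f g` is bounded by the product of two Schwartz norms, and so
extends to the Banach spaces of weighted jets of order `k`. There the translation orbits `x ↦ τ_x h`
are smooth, with derivatives of polynomial growth controlled by Schwartz norms of `h`; as those of
`ψ_ε` and `φ_ε` are powers of `ε⁻¹`, the net `H` is moderate.

Integrating the kernel against `f` and `g` only averages further: it evaluates `Λ` at `f` smeared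
by `ψ_ε` and at `g` smeared by `φ_ε` and `φ_{ε^s}`. As all moments of a mollifier vanish, Taylor
expansion of the orbits shows that these smeared functions approach `f` and `g` faster than every
power of `ε`, in every Schwartz norm.
-/

open SchwartzMap LineDeriv Topology
open scoped ContDiff LineDeriv BoundedContinuousFunction

section WeightedJets

variable {E : Type*} [NormedAddCommGroup E] [NormedSpace ℝ E]

/-- The Banach space of `(k + 1)`-tuples of bounded continuous functions, the `l`-th one with values
in the `l`-linear forms; it is the target of the weighted jets of order `k` of Schwartz
functions. -/
def WeightedJets (E : Type*) [NormedAddCommGroup E] [NormedSpace ℝ E] (k : ℕ) : Type _ :=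
  ∀ l : Fin (k + 1), E →ᵇ (E [×l]→L[ℝ] ℂ)

namespace WeightedJets

noncomputable instance (k : ℕ) : NormedAddCommGroup (WeightedJets E k) :=
  inferInstanceAs (NormedAddCommGroup (∀ l : Fin (k + 1), E →ᵇ (E [×l]→L[ℝ] ℂ)))

noncomputable instance (k : ℕ) : NormedSpace ℂ (WeightedJets E k) :=
  inferInstanceAs (NormedSpace ℂ (∀ l : Fin (k + 1), E →ᵇ (E [×l]→L[ℝ] ℂ)))

instance (k : ℕ) : CompleteSpace (WeightedJets E k) :=
  inferInstanceAs (CompleteSpace (∀ l : Fin (k + 1), E →ᵇ (E [×l]→L[ℝ] ℂ)))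

/-- Evaluation of the `l`-th component of a weighted jet at the point `x` in the directions `v`. -/
noncomputable def eval {k : ℕ} (l : Fin (k + 1)) (x : E) (v : Fin l → E) :
    WeightedJets E k →L[ℂ] ℂ :=
  LinearMap.mkContinuous
    { toFun y := y l x v
      map_add' _ _ := rfl
      map_smul' _ _ := rfl } (∏ i, ‖v i‖) fun y =>
    calc ‖y l x v‖ ≤ ‖y l x‖ * ∏ i, ‖v i‖ := ContinuousMultilinearMap.le_opNorm _ _
      _ ≤ ‖y‖ * ∏ i, ‖v i‖ := by
        gcongr
        exact ((y l).norm_coe_le_norm x).trans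
          (norm_le_pi_norm (y : ∀ l : Fin (k + 1), E →ᵇ (E [×l]→L[ℝ] ℂ)) l)
      _ = (∏ i, ‖v i‖) * ‖y‖ := mul_comm _ _

theorem eval_apply {k : ℕ} (l : Fin (k + 1)) (x : E) (v : Fin l → E) (y : WeightedJets E k) :
    eval l x v y = y l x v := rfl

end WeightedJets

theorem contDiff_iteratedFDeriv (h : 𝓢(E, ℂ)) (l j : ℕ) : ContDiff ℝ j (iteratedFDeriv ℝ l h) :=
  (h.smooth (j + l : ℕ)).iteratedFDeriv_right (by push_cast; rfl)

theorem differentiable_iteratedFDeriv (h : 𝓢(E, ℂ)) (l : ℕ) :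
    Differentiable ℝ (iteratedFDeriv ℝ l h) :=
  (contDiff_iteratedFDeriv h l 1).differentiable one_ne_zero

/-- The function `x ↦ (1 + ‖x‖) ^ k • D^l h(x)`. -/
noncomputable def weightedIteratedFDeriv (k l : ℕ) (h : 𝓢(E, ℂ)) : E →ᵇ (E [×l]→L[ℝ] ℂ) :=
  .ofNormedAddCommGroup (fun x => (1 + ‖x‖) ^ k • iteratedFDeriv ℝ l h x)
    (by have := (differentiable_iteratedFDeriv h l).continuous; fun_prop)
    (2 ^ k * ((Finset.Iic (k, l)).sup fun i => SchwartzMap.seminorm ℝ i.1 i.2) h)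
    fun x => by
      rw [norm_smul, Real.norm_of_nonneg (by positivity)]
      exact one_add_le_sup_seminorm_apply (𝕜 := ℝ) (m := (k, l)) le_rfl le_rfl h x

/-- The jet of order `k` of a Schwartz function, weighted by `(1 + ‖x‖) ^ k`. The seminorms
`h ↦ ‖weightedJet k h‖`, which are the `μ_{k,k}` of the theorem, define the Schwartz topology. -/
noncomputable def weightedJet (k : ℕ) : 𝓢(E, ℂ) →ₗ[ℂ] WeightedJets E k where
  toFun h l := weightedIteratedFDeriv k l h
  map_add' f g := by
    refine funext fun l => BoundedContinuousFunction.ext fun x => ?_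
    exact (congrArg _ (iteratedFDeriv_add_apply (f.contDiffAt _) (g.contDiffAt _))).trans
      (smul_add _ _ _)
  map_smul' c f := by
    refine funext fun l => BoundedContinuousFunction.ext fun x => ?_
    exact (congrArg _ (iteratedFDeriv_const_smul_apply (a := c) (f.contDiffAt _))).trans
      (smul_comm _ _ _)

theorem weightedJet_apply (k : ℕ) (h : 𝓢(E, ℂ)) (l : Fin (k + 1)) (x : E) :
    weightedJet k h l x = (1 + ‖x‖) ^ k • iteratedFDeriv ℝ l h x := rfl

theorem norm_weightedJet_apply (k : ℕ) (h : 𝓢(E, ℂ)) (l : Fin (k + 1)) (x : E) :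
    ‖weightedJet k h l x‖ = (1 + ‖x‖) ^ k * ‖iteratedFDeriv ℝ l h x‖ := by
  rw [weightedJet_apply, norm_smul, Real.norm_of_nonneg (by positivity)]

theorem norm_weightedJet_le_iff {k : ℕ} {h : 𝓢(E, ℂ)} {M : ℝ} (hM : 0 ≤ M) :
    ‖weightedJet k h‖ ≤ M ↔ ∀ l ≤ k, ∀ x, (1 + ‖x‖) ^ k * ‖iteratedFDeriv ℝ l h x‖ ≤ M := by
  refine (pi_norm_le_iff_of_nonneg hM).trans ?_
  simp only [BoundedContinuousFunction.norm_le hM, norm_weightedJet_apply, Fin.forall_iff,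
    Nat.lt_succ_iff]

theorem weight_mul_norm_iteratedFDeriv_le {j k l : ℕ} (hj : j ≤ k) (hl : l ≤ k) (h : 𝓢(E, ℂ))
    (x : E) : (1 + ‖x‖) ^ j * ‖iteratedFDeriv ℝ l h x‖ ≤ ‖weightedJet k h‖ :=
  calc (1 + ‖x‖) ^ j * ‖iteratedFDeriv ℝ l h x‖
      ≤ (1 + ‖x‖) ^ k * ‖iteratedFDeriv ℝ l h x‖ := by
        gcongr; exact le_add_of_nonneg_right (norm_nonneg x)
    _ ≤ ‖weightedJet k h‖ := (norm_weightedJet_le_iff (norm_nonneg _)).1 le_rfl l hl x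

theorem norm_iteratedFDeriv_le {k l : ℕ} (hl : l ≤ k) (h : 𝓢(E, ℂ)) (x : E) :
    ‖iteratedFDeriv ℝ l h x‖ ≤ ‖weightedJet k h‖ := by
  simpa only [pow_zero, one_mul] using weight_mul_norm_iteratedFDeriv_le (Nat.zero_le k) hl h x

theorem norm_weightedJet_mono {j k : ℕ} (hjk : j ≤ k) (h : 𝓢(E, ℂ)) :
    ‖weightedJet j h‖ ≤ ‖weightedJet k h‖ :=
  (norm_weightedJet_le_iff (norm_nonneg _)).2 fun _ hl x =>
    weight_mul_norm_iteratedFDeriv_le hjk (hl.trans hjk) h x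

theorem weightedJet_injective (k : ℕ) : Function.Injective (weightedJet (E := E) k) := by
  rw [injective_iff_map_eq_zero]
  intro h hh
  ext x
  simpa [hh] using norm_iteratedFDeriv_le (Nat.zero_le k) h x

theorem seminorm_le_norm_weightedJet {i : ℕ × ℕ} {k : ℕ} (h₁ : i.1 ≤ k) (h₂ : i.2 ≤ k)
    (h : 𝓢(E, ℂ)) : schwartzSeminormFamily ℂ E ℂ i h ≤ ‖weightedJet k h‖ := by
  refine seminorm_le_bound ℂ i.1 i.2 h (norm_nonneg _) fun x => ?_
  refine le_trans ?_ (weight_mul_norm_iteratedFDeriv_le h₁ h₂ h x)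
  gcongr
  exact le_add_of_nonneg_left zero_le_one

theorem exists_norm_le_norm_weightedJet {V : Type*} [SeminormedAddCommGroup V] [NormedSpace ℂ V]
    (L : 𝓢(E, ℂ) →L[ℂ] V) :
    ∃ k, ∃ C ≥ 0, ∀ h, ‖L h‖ ≤ C * ‖weightedJet k h‖ := by
  obtain ⟨s, C, -, hC⟩ := Seminorm.bound_of_continuous (schwartz_withSeminorms ℂ E ℂ)
    ((normSeminorm ℂ V).comp L.toLinearMap) L.continuous.norm
  refine ⟨s.sup Prod.fst ⊔ s.sup Prod.snd, C, C.2, fun h => (hC h).trans ?_⟩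
  refine mul_le_mul_of_nonneg_left (Seminorm.finset_sup_apply_le (norm_nonneg _) fun i hi => ?_) C.2
  exact seminorm_le_norm_weightedJet
    ((Finset.le_sup (f := Prod.fst) hi).trans le_sup_left)
    ((Finset.le_sup (f := Prod.snd) hi).trans le_sup_right) h

/-- The map on the weighted jets of Schwartz functions induced by a linear map `L` on Schwartz
functions which is bounded with respect to these jets. -/
noncomputable def jetFunctional {V : Type*} [SeminormedAddCommGroup V] [NormedSpace ℂ V] {k : ℕ}
    (L : 𝓢(E, ℂ) →ₗ[ℂ] V) (C : ℝ) (hL : ∀ h, ‖L h‖ ≤ C * ‖weightedJet k h‖) :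
    LinearMap.range (weightedJet (E := E) k) →L[ℂ] V :=
  (L ∘ₗ (LinearEquiv.ofInjective _ (weightedJet_injective k)).symm.toLinearMap).mkContinuous C
    fun v => by
      obtain ⟨h, rfl⟩ := (LinearEquiv.ofInjective _ (weightedJet_injective k)).surjective v
      simpa using hL h

theorem jetFunctional_rangeRestrict {V : Type*} [SeminormedAddCommGroup V] [NormedSpace ℂ V]
    {k : ℕ} {L : 𝓢(E, ℂ) →ₗ[ℂ] V} {C : ℝ} (hL : ∀ h, ‖L h‖ ≤ C * ‖weightedJet k h‖) (h : 𝓢(E, ℂ)) :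
    jetFunctional L C hL ((weightedJet k).rangeRestrict h) = L h :=
  congrArg L ((LinearEquiv.ofInjective _ (weightedJet_injective k)).symm_apply_apply h)

theorem exists_eq_comp_weightedJet (L : 𝓢(E, ℂ) →L[ℂ] ℂ) :
    ∃ (k : ℕ) (M : WeightedJets E k →L[ℂ] ℂ), ∀ h, L h = M (weightedJet k h) := by
  obtain ⟨k, C, -, hL⟩ := exists_norm_le_norm_weightedJet L
  obtain ⟨M, hM, -⟩ := exists_extension_norm_eq _ (jetFunctional L.toLinearMap C hL)
  refine ⟨k, M, fun h => ?_⟩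
  exact ((hM ((weightedJet k).rangeRestrict h)).trans (jetFunctional_rangeRestrict hL h)).symm

end WeightedJets

section JointContinuity

variable {E F : Type*} [NormedAddCommGroup E] [NormedSpace ℝ E]
  [NormedAddCommGroup F] [NormedSpace ℝ F]

theorem exists_normalized_of_lt_norm (B : 𝓢(E, ℂ) →ₗ[ℂ] 𝓢(F, ℂ) →ₗ[ℂ] ℂ) {k : ℕ} {C : ℝ}
    (hC : 0 < C) {f : 𝓢(E, ℂ)} {g : 𝓢(F, ℂ)}
    (hfg : C * ‖weightedJet k f‖ * ‖weightedJet k g‖ < ‖B f g‖) :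
    ∃ f' g', ‖weightedJet k f'‖ = C⁻¹ ∧ ‖weightedJet k g'‖ = 1 ∧ 1 < ‖B f' g'‖ := by
  have hf : 0 < ‖weightedJet k f‖ := by
    rw [norm_pos_iff, map_ne_zero_iff _ (weightedJet_injective k)]
    rintro rfl
    simp at hfg
  have hg : 0 < ‖weightedJet k g‖ := by
    rw [norm_pos_iff, map_ne_zero_iff _ (weightedJet_injective k)]
    rintro rfl
    simp at hfg
  refine ⟨((C * ‖weightedJet k f‖ : ℝ) : ℂ)⁻¹ • f, ((‖weightedJet k g‖ : ℝ) : ℂ)⁻¹ • g, ?_, ?_, ?_⟩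
  · rw [map_smul, norm_smul, norm_inv, Complex.norm_real, Real.norm_of_nonneg (by positivity)]
    field_simp
  · rw [map_smul, norm_smul, norm_inv, Complex.norm_real, norm_norm, inv_mul_cancel₀ hg.ne']
  · rw [B.map_smul, LinearMap.smul_apply, map_smul, norm_smul, norm_smul, norm_inv, norm_inv,
      Complex.norm_real, Complex.norm_real, norm_norm, Real.norm_of_nonneg (by positivity),
      ← mul_assoc, ← mul_inv, inv_mul_eq_div, one_lt_div (by positivity)]
    exact hfg

theorem isVonNBounded_range_of_norm_weightedJet_le_one {g : ℕ → 𝓢(E, ℂ)}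
    (hg : ∀ j, ‖weightedJet j (g j)‖ ≤ 1) : Bornology.IsVonNBounded ℂ (Set.range g) := by
  rw [(schwartz_withSeminorms ℂ E ℂ).isVonNBounded_iff_seminorm_bounded]
  intro i
  set S := ∑ j ∈ Finset.range (max i.1 i.2), schwartzSeminormFamily ℂ E ℂ i (g j)
  have hS : 0 ≤ S := Finset.sum_nonneg fun _ _ => apply_nonneg _ _
  refine ⟨S + 2, by positivity, ?_⟩
  rintro _ ⟨j, rfl⟩
  rcases lt_or_ge j (max i.1 i.2) with hj | hj
  · have := Finset.single_le_sum (f := fun j => schwartzSeminormFamily ℂ E ℂ i (g j))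
      (fun _ _ => apply_nonneg _ _) (Finset.mem_range.2 hj)
    exact this.trans_lt (lt_add_of_pos_right S two_pos)
  · have := seminorm_le_norm_weightedJet ((le_max_left _ _).trans hj)
      ((le_max_right _ _).trans hj) (g j)
    linarith [hg j]

theorem tendsto_zero_of_norm_weightedJet_le {f : ℕ → 𝓢(E, ℂ)} {b : ℕ → ℝ}
    (hf : ∀ j, ‖weightedJet j (f j)‖ ≤ b j) (hb : Tendsto b atTop (𝓝 0)) :
    Tendsto f atTop (𝓝 0) := by
  rw [(schwartz_withSeminorms ℂ E ℂ).tendsto_nhds]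
  intro i ε hε
  filter_upwards [hb.eventually_lt_const hε, eventually_ge_atTop (max i.1 i.2)] with j hjb hj
  rw [sub_zero]
  exact ((seminorm_le_norm_weightedJet ((le_max_left _ _).trans hj)
    ((le_max_right _ _).trans hj) (f j)).trans (hf j)).trans_lt hjb

/- In a counterexample for `k = j` one may normalise `f` to size `1 / (j + 1)` and `g` to size `1`.
The resulting `f j` tend to zero while the `g j` form a bounded set, on which `Λ (f j)` would have
to converge to zero uniformly. -/
theorem exists_norm_apply_apply_le (Λ : 𝓢(E, ℂ) →L[ℂ] (𝓢(F, ℂ) →L[ℂ] ℂ)) :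
    ∃ k, ∃ C ≥ 0, ∀ f g, ‖Λ f g‖ ≤ C * ‖weightedJet k f‖ * ‖weightedJet k g‖ := by
  by_contra! hcon
  let B : 𝓢(E, ℂ) →ₗ[ℂ] 𝓢(F, ℂ) →ₗ[ℂ] ℂ := ContinuousLinearMap.coeLM ℂ ∘ₗ Λ.toLinearMap
  have normalized (j : ℕ) : ∃ f g, ‖weightedJet j f‖ = ((j : ℝ) + 1)⁻¹ ∧ ‖weightedJet j g‖ = 1 ∧
      1 < ‖Λ f g‖ := by
    obtain ⟨f, g, hfg⟩ := hcon j (j + 1) (by positivity)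
    exact exists_normalized_of_lt_norm B (by positivity) hfg
  choose f g hf hg hfg using normalized
  have hf_lim : Tendsto f atTop (𝓝 0) := by
    refine tendsto_zero_of_norm_weightedJet_le (fun j => (hf j).le) ?_
    simpa only [one_div] using tendsto_one_div_add_atTop_nhds_zero_nat (𝕜 := ℝ)
  have hΛ_lim : Tendsto (fun j => Λ (f j)) atTop (𝓝 0) := by
    simpa only [map_zero, Function.comp_def] using (Λ.continuous.tendsto 0).comp hf_lim
  have hΛ_ball : ∀ᶠ L : 𝓢(F, ℂ) →L[ℂ] ℂ in 𝓝 0, Set.MapsTo L (Set.range g) (Metric.ball 0 1) :=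
    ContinuousLinearMap.eventually_nhds_zero_mapsTo
      (isVonNBounded_range_of_norm_weightedJet_le_one fun j => (hg j).le)
      (Metric.ball_mem_nhds (0 : ℂ) one_pos)
  obtain ⟨j, hj⟩ := (hΛ_lim.eventually hΛ_ball).exists
  exact (mem_ball_zero_iff.1 (hj ⟨j, rfl⟩)).not_gt (hfg j)

end JointContinuity

section Translation

variable {E : Type*} [NormedAddCommGroup E] [NormedSpace ℝ E]

theorem lineDerivOp_comm (h : 𝓢(E, ℂ)) (a b : E) : ∂_{a} (∂_{b} h) = ∂_{b} (∂_{a} h) := by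
  have fderiv_lineDerivOp (x a b : E) :
      fderiv ℝ (∂_{b} h : 𝓢(E, ℂ)) x a = fderiv ℝ (fderiv ℝ h) x a b := by
    have hd : DifferentiableAt ℝ (fderiv ℝ h) x :=
      ((h.smooth 2).fderiv_right (m := 1) le_rfl).differentiable one_ne_zero x
    have hb : ⇑(∂_{b} h : 𝓢(E, ℂ)) = fun y => fderiv ℝ h y b :=
      funext fun y => lineDerivOp_apply_eq_fderiv ..
    rw [hb, fderiv_clm_apply hd (differentiableAt_const b)]
    simp
  ext x
  rw [lineDerivOp_apply_eq_fderiv, lineDerivOp_apply_eq_fderiv, fderiv_lineDerivOp,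
    fderiv_lineDerivOp]
  exact ((h.smooth 2).contDiffAt.isSymmSndFDerivAt (by simp)) a b

theorem lineDerivOp_iteratedLineDerivOp_comm (h : 𝓢(E, ℂ)) (a : E) {l : ℕ} (v : Fin l → E) :
    ∂_{a} (∂^{v} h) = ∂^{v} (∂_{a} h) := by
  induction l with
  | zero => rfl
  | succ l ih =>
    rw [iteratedLineDerivOp_succ_left, iteratedLineDerivOp_succ_left, lineDerivOp_comm, ih]

theorem iteratedFDeriv_lineDerivOp (h : 𝓢(E, ℂ)) (a : E) (l : ℕ) (x : E) :
    iteratedFDeriv ℝ l (∂_{a} h : 𝓢(E, ℂ)) x = fderiv ℝ (iteratedFDeriv ℝ l h) x a := by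
  ext v
  calc iteratedFDeriv ℝ l (∂_{a} h : 𝓢(E, ℂ)) x v = ∂^{v} (∂_{a} h) x :=
        iteratedLineDerivOp_eq_iteratedFDeriv.symm
    _ = ∂^{(Fin.cons a v : Fin (l + 1) → E)} h x := by
        rw [← lineDerivOp_iteratedLineDerivOp_comm, iteratedLineDerivOp_succ_left, Fin.cons_zero,
          Fin.tail_cons]
    _ = fderiv ℝ (iteratedFDeriv ℝ l h) x a v := by
        rw [iteratedLineDerivOp_eq_iteratedFDeriv, iteratedFDeriv_succ_apply_left, Fin.cons_zero,
          Fin.tail_cons]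

theorem norm_weightedJet_lineDerivOp_le (k : ℕ) (h : 𝓢(E, ℂ)) (a : E) :
    ‖weightedJet k (∂_{a} h)‖ ≤ ‖weightedJet (k + 1) h‖ * ‖a‖ := by
  refine (norm_weightedJet_le_iff (by positivity)).2 fun l hl x => ?_
  calc (1 + ‖x‖) ^ k * ‖iteratedFDeriv ℝ l (∂_{a} h : 𝓢(E, ℂ)) x‖
      ≤ (1 + ‖x‖) ^ k * (‖iteratedFDeriv ℝ (l + 1) h x‖ * ‖a‖) := by
        rw [iteratedFDeriv_lineDerivOp, ← norm_fderiv_iteratedFDeriv]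
        gcongr
        exact ContinuousLinearMap.le_opNorm _ _
    _ = (1 + ‖x‖) ^ k * ‖iteratedFDeriv ℝ (l + 1) h x‖ * ‖a‖ := (mul_assoc _ _ _).symm
    _ ≤ ‖weightedJet (k + 1) h‖ * ‖a‖ := by
        gcongr
        exact weight_mul_norm_iteratedFDeriv_le k.le_succ (Nat.succ_le_succ hl) h x

theorem norm_weightedJet_iteratedLineDerivOp_le (k : ℕ) (h : 𝓢(E, ℂ)) {l : ℕ} (v : Fin l → E) :
    ‖weightedJet k (∂^{v} h)‖ ≤ ‖weightedJet (k + l) h‖ * ∏ i, ‖v i‖ := by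
  induction l generalizing k with
  | zero => simp
  | succ l ih =>
    rw [iteratedLineDerivOp_succ_left]
    calc ‖weightedJet k (∂_{v 0} (∂^{Fin.tail v} h))‖
        ≤ ‖weightedJet (k + 1) (∂^{Fin.tail v} h)‖ * ‖v 0‖ :=
          norm_weightedJet_lineDerivOp_le k _ _
      _ ≤ ‖weightedJet (k + 1 + l) h‖ * (∏ i, ‖Fin.tail v i‖) * ‖v 0‖ := by
          gcongr
          exact ih (k + 1) (Fin.tail v)
      _ = ‖weightedJet (k + (l + 1)) h‖ * ∏ i, ‖v i‖ := by
          rw [Fin.prod_univ_succ, mul_assoc, mul_comm (∏ i, _), add_right_comm, add_assoc]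
          rfl

theorem iteratedFDeriv_compSubConstCLM (h : 𝓢(E, ℂ)) (a : E) (l : ℕ) (x : E) :
    iteratedFDeriv ℝ l (compSubConstCLM ℂ a h) x = iteratedFDeriv ℝ l h (x - a) :=
  iteratedFDeriv_comp_sub l a x

theorem lineDerivOp_compSubConstCLM (h : 𝓢(E, ℂ)) (a b : E) :
    ∂_{b} (compSubConstCLM ℂ a h) = compSubConstCLM ℂ a (∂_{b} h) := by
  ext x
  rw [lineDerivOp_apply_eq_fderiv, compSubConstCLM_apply, lineDerivOp_apply_eq_fderiv]
  exact congrArg (· b) (fderiv_comp_sub (𝕜 := ℝ) (f := h) a)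

theorem compSubConstCLM_compSubConstCLM (h : 𝓢(E, ℂ)) (a b : E) :
    compSubConstCLM ℂ a (compSubConstCLM ℂ b h) = compSubConstCLM ℂ (a + b) h := by
  ext x
  simp only [compSubConstCLM_apply, sub_sub]

theorem one_add_norm_le_mul {E : Type*} [SeminormedAddCommGroup E] (x a : E) :
    1 + ‖x‖ ≤ (1 + ‖a‖) * (1 + ‖x - a‖) := by
  have := norm_le_norm_add_norm_sub' x a
  nlinarith [norm_nonneg (x - a), norm_nonneg a]

theorem weight_mul_norm_iteratedFDeriv_sub_le {k l : ℕ} (hl : l ≤ k) (h : 𝓢(E, ℂ)) (x a : E) :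
    (1 + ‖x‖) ^ k * ‖iteratedFDeriv ℝ l h (x - a)‖ ≤ (1 + ‖a‖) ^ k * ‖weightedJet k h‖ :=
  calc (1 + ‖x‖) ^ k * ‖iteratedFDeriv ℝ l h (x - a)‖
      ≤ ((1 + ‖a‖) * (1 + ‖x - a‖)) ^ k * ‖iteratedFDeriv ℝ l h (x - a)‖ := by
        gcongr; exact one_add_norm_le_mul x a
    _ = (1 + ‖a‖) ^ k * ((1 + ‖x - a‖) ^ k * ‖iteratedFDeriv ℝ l h (x - a)‖) := by
        rw [mul_pow, mul_assoc]
    _ ≤ (1 + ‖a‖) ^ k * ‖weightedJet k h‖ := by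
        gcongr; exact weight_mul_norm_iteratedFDeriv_le le_rfl hl h _

theorem norm_weightedJet_compSubConstCLM_le (k : ℕ) (h : 𝓢(E, ℂ)) (a : E) :
    ‖weightedJet k (compSubConstCLM ℂ a h)‖ ≤ (1 + ‖a‖) ^ k * ‖weightedJet k h‖ :=
  (norm_weightedJet_le_iff (by positivity)).2 fun l hl x => by
    rw [iteratedFDeriv_compSubConstCLM]
    exact weight_mul_norm_iteratedFDeriv_sub_le hl h x a

theorem hasDerivAt_iteratedFDeriv_sub_smul (h : 𝓢(E, ℂ)) (l : ℕ) (x a : E) (s : ℝ) :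
    HasDerivAt (fun s : ℝ => iteratedFDeriv ℝ l h (x - s • a))
      (-iteratedFDeriv ℝ l (∂_{a} h : 𝓢(E, ℂ)) (x - s • a)) s := by
  have h_line : HasDerivAt (fun s : ℝ => x - s • a) (-a) s := by
    simpa using ((hasDerivAt_id s).smul_const a).const_sub x
  rw [iteratedFDeriv_lineDerivOp, ← map_neg]
  exact (differentiable_iteratedFDeriv h l _).hasFDerivAt.comp_hasDerivAt s h_line

theorem norm_smul_le_of_mem_Icc {s : ℝ} (hs : s ∈ Set.Icc 0 1) (a : E) : ‖s • a‖ ≤ ‖a‖ := by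
  rw [norm_smul, Real.norm_of_nonneg hs.1]
  exact mul_le_of_le_one_left (norm_nonneg a) hs.2

theorem norm_weightedJet_compSubConstCLM_sub_le (k : ℕ) (h : 𝓢(E, ℂ)) (a : E) :
    ‖weightedJet k (compSubConstCLM ℂ a h - h)‖ ≤
      (1 + ‖a‖) ^ k * (‖weightedJet (k + 1) h‖ * ‖a‖) := by
  refine (norm_weightedJet_le_iff (by positivity)).2 fun l hl x => ?_
  have h_sub : iteratedFDeriv ℝ l (compSubConstCLM ℂ a h - h : 𝓢(E, ℂ)) x =
      iteratedFDeriv ℝ l h (x - (1 : ℝ) • a) - iteratedFDeriv ℝ l h (x - (0 : ℝ) • a) := by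
    rw [one_smul, zero_smul, sub_zero, ← iteratedFDeriv_compSubConstCLM]
    exact iteratedFDeriv_sub_apply (SchwartzMap.contDiffAt _ _) (SchwartzMap.contDiffAt _ _)
  rw [h_sub, ← le_div_iff₀' (by positivity)]
  refine norm_image_sub_le_of_norm_deriv_le_segment_01'
    (fun s _ => (hasDerivAt_iteratedFDeriv_sub_smul h l x a s).hasDerivWithinAt) fun s hs => ?_
  rw [norm_neg, le_div_iff₀' (by positivity)]
  calc (1 + ‖x‖) ^ k * ‖iteratedFDeriv ℝ l (∂_{a} h : 𝓢(E, ℂ)) (x - s • a)‖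
      ≤ (1 + ‖s • a‖) ^ k * ‖weightedJet k (∂_{a} h)‖ :=
        weight_mul_norm_iteratedFDeriv_sub_le hl _ x (s • a)
    _ ≤ (1 + ‖a‖) ^ k * (‖weightedJet (k + 1) h‖ * ‖a‖) := by
        gcongr
        · exact norm_smul_le_of_mem_Icc (Set.Ico_subset_Icc_self hs) a
        · exact norm_weightedJet_lineDerivOp_le k h a

theorem norm_weightedJet_compSubConstCLM_sub_add_le (k : ℕ) (h : 𝓢(E, ℂ)) (a : E) :
    ‖weightedJet k (compSubConstCLM ℂ a h - h + ∂_{a} h)‖ ≤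
      (1 + ‖a‖) ^ k * (‖weightedJet (k + 2) h‖ * ‖a‖ * ‖a‖) := by
  refine (norm_weightedJet_le_iff (by positivity)).2 fun l hl x => ?_
  set G : ℝ → E [×l]→L[ℝ] ℂ := fun s =>
    iteratedFDeriv ℝ l h (x - s • a) + s • iteratedFDeriv ℝ l (∂_{a} h : 𝓢(E, ℂ)) x with hG
  have h_sub_apply (f g : 𝓢(E, ℂ)) : iteratedFDeriv ℝ l (f - g : 𝓢(E, ℂ)) x =
      iteratedFDeriv ℝ l f x - iteratedFDeriv ℝ l g x :=
    iteratedFDeriv_sub_apply (f.contDiffAt _) (g.contDiffAt _)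
  have h_diff : iteratedFDeriv ℝ l (compSubConstCLM ℂ a h - h + ∂_{a} h : 𝓢(E, ℂ)) x =
      G 1 - G 0 := by
    have h_add := iteratedFDeriv_add_apply (i := l) (x := x)
      ((compSubConstCLM ℂ a h - h).contDiffAt _) ((∂_{a} h : 𝓢(E, ℂ)).contDiffAt _)
    simp only [hG, one_smul, zero_smul, sub_zero, add_zero, add_sub_right_comm]
    rw [← iteratedFDeriv_compSubConstCLM, ← h_sub_apply]
    exact h_add
  have h_deriv (s : ℝ) : HasDerivAt G
      (-iteratedFDeriv ℝ l (compSubConstCLM ℂ (s • a) (∂_{a} h) - ∂_{a} h : 𝓢(E, ℂ)) x) s := by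
    rw [h_sub_apply, iteratedFDeriv_compSubConstCLM, neg_sub, ← neg_add_eq_sub]
    have h_linear := (hasDerivAt_id s).smul_const (iteratedFDeriv ℝ l (∂_{a} h : 𝓢(E, ℂ)) x)
    rw [one_smul] at h_linear
    exact (hasDerivAt_iteratedFDeriv_sub_smul h l x a s).add h_linear
  rw [h_diff, ← le_div_iff₀' (by positivity)]
  refine norm_image_sub_le_of_norm_deriv_le_segment_01'
    (fun s _ => (h_deriv s).hasDerivWithinAt) fun s hs => ?_
  rw [norm_neg, le_div_iff₀' (by positivity)]
  have hsa : ‖s • a‖ ≤ ‖a‖ := norm_smul_le_of_mem_Icc (Set.Ico_subset_Icc_self hs) a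
  calc (1 + ‖x‖) ^ k *
        ‖iteratedFDeriv ℝ l (compSubConstCLM ℂ (s • a) (∂_{a} h) - ∂_{a} h : 𝓢(E, ℂ)) x‖
      ≤ ‖weightedJet k (compSubConstCLM ℂ (s • a) (∂_{a} h) - ∂_{a} h)‖ :=
        weight_mul_norm_iteratedFDeriv_le le_rfl hl _ x
    _ ≤ (1 + ‖s • a‖) ^ k * (‖weightedJet (k + 1) (∂_{a} h)‖ * ‖s • a‖) :=
        norm_weightedJet_compSubConstCLM_sub_le k _ _
    _ ≤ (1 + ‖a‖) ^ k * (‖weightedJet (k + 2) h‖ * ‖a‖ * ‖a‖) := by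
        gcongr
        exact norm_weightedJet_lineDerivOp_le (k + 1) h a

end Translation

section Orbit

variable {E V : Type*} [NormedAddCommGroup E] [NormedSpace ℝ E] [NormedAddCommGroup V]

section Chain

variable [NormedSpace ℝ V]

theorem contDiff_of_fderiv_eq_smul_lineDerivOp [FiniteDimensional ℝ E] {T : 𝓢(E, ℂ) → E → V}
    {c : ℝ} (hd : ∀ h, Differentiable ℝ (T h))
    (hT : ∀ h x w, fderiv ℝ (T h) x w = c • T (∂_{w} h) x) (h : 𝓢(E, ℂ)) : ContDiff ℝ ∞ (T h) := by
  refine contDiff_infty.2 fun n => ?_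
  induction n generalizing h with
  | zero => exact contDiff_zero.2 (hd h).continuous
  | succ n ih =>
    push_cast
    refine contDiff_succ_iff_fderiv_apply.2 ⟨hd h, by simp, fun w => ?_⟩
    simp only [hT]
    exact contDiff_const.smul (ih (∂_{w} h))

theorem iteratedFDeriv_apply_eq_smul_iteratedLineDerivOp {T : 𝓢(E, ℂ) → E → V} {c : ℝ}
    (hsmooth : ∀ h, ContDiff ℝ ∞ (T h)) (hT : ∀ h x w, fderiv ℝ (T h) x w = c • T (∂_{w} h) x)
    {l : ℕ} (h : 𝓢(E, ℂ)) (x : E) (v : Fin l → E) :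
    iteratedFDeriv ℝ l (T h) x v = c ^ l • T (∂^{v} h) x := by
  induction l generalizing x with
  | zero => simp
  | succ l ih =>
    have hd : DifferentiableAt ℝ (iteratedFDeriv ℝ l (T h)) x :=
      (hsmooth h).differentiable_iteratedFDeriv (mod_cast ENat.natCast_lt_top l) x
    calc iteratedFDeriv ℝ (l + 1) (T h) x v
        = fderiv ℝ (fun y => iteratedFDeriv ℝ l (T h) y (Fin.tail v)) x (v 0) := by
          rw [iteratedFDeriv_succ_apply_left,
            ← fderiv_continuousMultilinear_apply_const_apply hd]
      _ = fderiv ℝ (fun y => c ^ l • T (∂^{Fin.tail v} h) y) x (v 0) := by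
          simp only [ih]
      _ = c ^ (l + 1) • T (∂^{v} h) x := by
          rw [fderiv_fun_const_smul ((hsmooth _).differentiable (by simp) x), smul_apply,
            hT, smul_smul, ← pow_succ, iteratedLineDerivOp_succ_left]

end Chain

variable [Module ℂ V]

/-- The orbit `a ↦ A (τ_a h)` of a Schwartz function `h` under translations, seen through `A`. -/
noncomputable def translationOrbit (A : 𝓢(E, ℂ) →ₗ[ℂ] V) (h : 𝓢(E, ℂ)) (a : E) : V :=
  A (compSubConstCLM ℂ a h)

variable {A : 𝓢(E, ℂ) →ₗ[ℂ] V} {k : ℕ} {C : ℝ}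

theorem isBigO_translationOrbit_sub_add (hC : 0 ≤ C) (hA : ∀ h, ‖A h‖ ≤ C * ‖weightedJet k h‖)
    (h : 𝓢(E, ℂ)) (a : E) :
    (fun w => translationOrbit A h (a + w) - translationOrbit A h a +
      translationOrbit A (∂_{w} h) a) =O[𝓝 0] fun w => ‖w‖ ^ 2 := by
  set g := compSubConstCLM ℂ a h
  refine .of_bound (C * (2 ^ k * ‖weightedJet (k + 2) g‖)) ?_
  filter_upwards [Metric.ball_mem_nhds (0 : E) one_pos] with w hw
  have h_eq : translationOrbit A h (a + w) - translationOrbit A h a +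
      translationOrbit A (∂_{w} h) a = A (compSubConstCLM ℂ w g - g + ∂_{w} g) := by
    rw [map_add, map_sub, compSubConstCLM_compSubConstCLM, add_comm w a,
      lineDerivOp_compSubConstCLM]
    rfl
  calc ‖translationOrbit A h (a + w) - translationOrbit A h a + translationOrbit A (∂_{w} h) a‖
      ≤ C * ‖weightedJet k (compSubConstCLM ℂ w g - g + ∂_{w} g)‖ := h_eq ▸ hA _
    _ ≤ C * ((1 + ‖w‖) ^ k * (‖weightedJet (k + 2) g‖ * ‖w‖ * ‖w‖)) := by
      gcongr; exact norm_weightedJet_compSubConstCLM_sub_add_le k g w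
    _ ≤ C * (2 ^ k * (‖weightedJet (k + 2) g‖ * ‖w‖ * ‖w‖)) := by
      gcongr; linarith [mem_ball_zero_iff.1 hw]
    _ = C * (2 ^ k * ‖weightedJet (k + 2) g‖) * ‖‖w‖ ^ 2‖ := by
      rw [norm_pow, norm_norm]; ring

variable [NormedSpace ℝ V] [IsScalarTower ℝ ℂ V]

theorem exists_hasFDerivAt_translationOrbit (hC : 0 ≤ C)
    (hA : ∀ h, ‖A h‖ ≤ C * ‖weightedJet k h‖) (h : 𝓢(E, ℂ)) (a : E) :
    ∃ D : E →L[ℝ] V, HasFDerivAt (translationOrbit A h) D a ∧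
      ∀ w, D w = -translationOrbit A (∂_{w} h) a := by
  let D₀ : E →ₗ[ℝ] V :=
    { toFun w := -translationOrbit A (∂_{w} h) a
      map_add' w₁ w₂ := by
        simp only [translationOrbit, lineDerivOp_left_add, map_add, neg_add]
      map_smul' r w := by
        simp only [translationOrbit, lineDerivOp_left_smul, (compSubConstCLM ℂ a).map_smul_of_tower,
          A.map_smul_of_tower, RingHom.id_apply, smul_neg] }
  have hD₀ (w : E) : ‖D₀ w‖ ≤ C * ((1 + ‖a‖) ^ k * ‖weightedJet (k + 1) h‖) * ‖w‖ :=
    calc ‖-translationOrbit A (∂_{w} h) a‖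
        ≤ C * ‖weightedJet k (compSubConstCLM ℂ a (∂_{w} h))‖ := by rw [norm_neg]; exact hA _
      _ ≤ C * ((1 + ‖a‖) ^ k * (‖weightedJet (k + 1) h‖ * ‖w‖)) := by
        gcongr
        refine (norm_weightedJet_compSubConstCLM_le k _ a).trans ?_
        gcongr
        exact norm_weightedJet_lineDerivOp_le k h w
      _ = C * ((1 + ‖a‖) ^ k * ‖weightedJet (k + 1) h‖) * ‖w‖ := by ring
  refine ⟨D₀.mkContinuous _ hD₀, ?_, fun w => rfl⟩
  refine hasFDerivAt_iff_isLittleO_nhds_zero.2 (Asymptotics.IsBigO.trans_isLittleO ?_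
    (Asymptotics.isLittleO_norm_pow_id one_lt_two))
  refine (isBigO_translationOrbit_sub_add hC hA h a).congr_left fun w => ?_
  exact (sub_neg_eq_add _ _).symm

theorem differentiable_translationOrbit (hC : 0 ≤ C) (hA : ∀ h, ‖A h‖ ≤ C * ‖weightedJet k h‖)
    (h : 𝓢(E, ℂ)) : Differentiable ℝ (translationOrbit A h) := fun a =>
  have ⟨_, hD, _⟩ := exists_hasFDerivAt_translationOrbit hC hA h a
  hD.differentiableAt

theorem fderiv_translationOrbit_apply (hC : 0 ≤ C) (hA : ∀ h, ‖A h‖ ≤ C * ‖weightedJet k h‖)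
    (h : 𝓢(E, ℂ)) (a w : E) :
    fderiv ℝ (translationOrbit A h) a w = (-1 : ℝ) • translationOrbit A (∂_{w} h) a := by
  obtain ⟨D, hD, hDw⟩ := exists_hasFDerivAt_translationOrbit hC hA h a
  rw [hD.fderiv, hDw, neg_one_smul]

theorem contDiff_translationOrbit [FiniteDimensional ℝ E] (hC : 0 ≤ C)
    (hA : ∀ h, ‖A h‖ ≤ C * ‖weightedJet k h‖) (h : 𝓢(E, ℂ)) :
    ContDiff ℝ ∞ (translationOrbit A h) :=
  contDiff_of_fderiv_eq_smul_lineDerivOp (differentiable_translationOrbit hC hA)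
    (fderiv_translationOrbit_apply hC hA) h

theorem norm_iteratedFDeriv_translationOrbit_le [FiniteDimensional ℝ E] (hC : 0 ≤ C)
    (hA : ∀ h, ‖A h‖ ≤ C * ‖weightedJet k h‖) (h : 𝓢(E, ℂ)) (l : ℕ) (a : E) :
    ‖iteratedFDeriv ℝ l (translationOrbit A h) a‖ ≤
      C * ((1 + ‖a‖) ^ k * ‖weightedJet (k + l) h‖) := by
  refine ContinuousMultilinearMap.opNorm_le_bound (by positivity) fun v => ?_
  rw [iteratedFDeriv_apply_eq_smul_iteratedLineDerivOp (contDiff_translationOrbit hC hA)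
    (fderiv_translationOrbit_apply hC hA), norm_smul, norm_pow, norm_neg, norm_one, one_pow,
    one_mul]
  calc ‖A (compSubConstCLM ℂ a (∂^{v} h))‖
      ≤ C * ((1 + ‖a‖) ^ k * ‖weightedJet k (∂^{v} h)‖) :=
        (hA _).trans (by gcongr; exact norm_weightedJet_compSubConstCLM_le k _ a)
    _ ≤ C * ((1 + ‖a‖) ^ k * (‖weightedJet (k + l) h‖ * ∏ i, ‖v i‖)) := by
        gcongr; exact norm_weightedJet_iteratedLineDerivOp_le k h v
    _ = C * ((1 + ‖a‖) ^ k * ‖weightedJet (k + l) h‖) * ∏ i, ‖v i‖ := by ring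

theorem contDiff_translationOrbit_weightedJet [FiniteDimensional ℝ E] (k : ℕ) (h : 𝓢(E, ℂ)) :
    ContDiff ℝ ∞ (translationOrbit (weightedJet k) h) :=
  contDiff_translationOrbit zero_le_one (fun _ => (one_mul _).ge) h

theorem norm_iteratedFDeriv_translationOrbit_weightedJet_le [FiniteDimensional ℝ E] (k : ℕ)
    (h : 𝓢(E, ℂ)) (l : ℕ) (a : E) :
    ‖iteratedFDeriv ℝ l (translationOrbit (weightedJet k) h) a‖ ≤
      (1 + ‖a‖) ^ k * ‖weightedJet (k + l) h‖ :=
  (norm_iteratedFDeriv_translationOrbit_le zero_le_one (fun _ => (one_mul _).ge) h l a).trans_eq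
    (one_mul _)

end Orbit

section Averaging

variable {E : Type*} [NormedAddCommGroup E] [NormedSpace ℝ E] {V : Type*} [NormedAddCommGroup V]
  [NormedSpace ℂ V] {f : E → V} {C : ℝ} {k : ℕ}

theorem one_add_norm_smul_pow_le (t : ℝ) (u : E) (k : ℕ) :
    (1 + ‖t • u‖) ^ k ≤ (1 + ‖u‖) ^ k * (1 + |t|) ^ k := by
  rw [← mul_pow, norm_smul, Real.norm_eq_abs]
  gcongr
  nlinarith [norm_nonneg u, abs_nonneg t]

theorem norm_smul_le_of_norm_le (ρ : 𝓢(E, ℂ)) (hf : ∀ u, ‖f u‖ ≤ (1 + ‖u‖) ^ k * C) (u : E) :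
    ‖ρ u • f u‖ ≤ (1 + ‖u‖) ^ k * ‖ρ u‖ * C :=
  calc ‖ρ u • f u‖ ≤ ‖ρ u‖ * ((1 + ‖u‖) ^ k * C) := by rw [norm_smul]; gcongr; exact hf u
    _ = (1 + ‖u‖) ^ k * ‖ρ u‖ * C := by ring

variable [MeasureSpace E]

/-- The absolute moment of order `k` of a Schwartz function, with weight `(1 + ‖u‖) ^ k`. -/
noncomputable def absMoment (ρ : 𝓢(E, ℂ)) (k : ℕ) : ℝ := ∫ u, (1 + ‖u‖) ^ k * ‖ρ u‖

theorem absMoment_nonneg (ρ : 𝓢(E, ℂ)) (k : ℕ) : 0 ≤ absMoment ρ k :=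
  integral_nonneg fun _ => by positivity

variable [FiniteDimensional ℝ E] [BorelSpace E] [(volume : Measure E).IsAddHaarMeasure]

theorem integrable_one_add_norm_pow_mul_norm (ρ : 𝓢(E, ℂ)) (k : ℕ) :
    Integrable fun u => (1 + ‖u‖) ^ k * ‖ρ u‖ := by
  simp only [add_comm (1 : ℝ), add_pow, one_pow, mul_one, Finset.sum_mul]
  refine integrable_finsetSum _ fun i _ => ?_
  refine ((ρ.integrable_pow_mul volume i).const_mul (k.choose i : ℝ)).congr (.of_forall fun u => ?_)
  ring

theorem integrable_smul_of_norm_le (ρ : 𝓢(E, ℂ)) (hf_cont : Continuous f)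
    (hf : ∀ u, ‖f u‖ ≤ (1 + ‖u‖) ^ k * C) : Integrable fun u => ρ u • f u :=
  ((integrable_one_add_norm_pow_mul_norm ρ k).mul_const C).mono'
    (ρ.continuous.smul hf_cont).aestronglyMeasurable
    (.of_forall (norm_smul_le_of_norm_le ρ hf))

theorem norm_integral_smul_le_of_norm_le (ρ : 𝓢(E, ℂ)) (hf : ∀ u, ‖f u‖ ≤ (1 + ‖u‖) ^ k * C) :
    ‖∫ u, ρ u • f u‖ ≤ absMoment ρ k * C :=
  (norm_integral_le_of_norm_le ((integrable_one_add_norm_pow_mul_norm ρ k).mul_const C)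
    (.of_forall (norm_smul_le_of_norm_le ρ hf))).trans_eq (integral_mul_const C _)

theorem integrable_smul_comp_sub_smul (ρ h : 𝓢(E, ℂ)) (t : ℝ) (x : E) :
    Integrable fun u => ρ u • h (x - t • u) := by
  refine integrable_smul_of_norm_le (k := 0) (C := ‖weightedJet 0 h‖) ρ
    (h.continuous.comp (by fun_prop)) fun u => ?_
  simpa using norm_iteratedFDeriv_le (Nat.zero_le 0) h (x - t • u)

theorem exists_hasFDerivAt_integral_smul_comp_sub_smul (ρ h : 𝓢(E, ℂ)) (t : ℝ) (x : E) :
    ∃ D : E →L[ℝ] ℂ, HasFDerivAt (fun x => ∫ u, ρ u • h (x - t • u)) D x ∧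
      ∀ w, D w = ∫ u, ρ u • (∂_{w} h) (x - t • u) := by
  have h_cont (x : E) : Continuous fun u => fderiv ℝ h (x - t • u) :=
    ((h.smooth 1).continuous_fderiv one_ne_zero).comp (by fun_prop)
  have h_bound (x : E) : ‖fderiv ℝ h x‖ ≤ ‖weightedJet 1 h‖ := by
    rw [← norm_iteratedFDeriv_one]; exact norm_iteratedFDeriv_le le_rfl h x
  have h_int : Integrable fun u => ρ u • fderiv ℝ h (x - t • u) :=
    integrable_smul_of_norm_le (k := 0) ρ (h_cont x) fun u => by simpa using h_bound _
  refine ⟨∫ u, ρ u • fderiv ℝ h (x - t • u), ?_, fun w => ?_⟩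
  · refine hasFDerivAt_integral_of_dominated_of_fderiv_le (𝕜 := ℝ)
      (F := fun x u => ρ u • h (x - t • u))
      (F' := fun x u => ρ u • fderiv ℝ h (x - t • u)) (bound := fun u => ‖ρ u‖ * ‖weightedJet 1 h‖)
      univ_mem (.of_forall fun x => (integrable_smul_comp_sub_smul ρ h t x).aestronglyMeasurable)
      (integrable_smul_comp_sub_smul ρ h t x) (ρ.continuous.smul (h_cont x)).aestronglyMeasurable
      (.of_forall fun u x _ => ?_) (ρ.integrable.norm.mul_const _) (.of_forall fun u x _ => ?_)
    · rw [norm_smul]; gcongr; exact h_bound _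
    · exact (h.differentiableAt.hasFDerivAt.comp x
        ((hasFDerivAt_id x).sub_const (t • u))).const_smul (ρ u)
  · rw [ContinuousLinearMap.integral_apply h_int]
    simp only [smul_apply, lineDerivOp_apply_eq_fderiv]

theorem differentiable_integral_smul_comp_sub_smul (ρ h : 𝓢(E, ℂ)) (t : ℝ) :
    Differentiable ℝ fun x => ∫ u, ρ u • h (x - t • u) := fun x =>
  have ⟨_, hD, _⟩ := exists_hasFDerivAt_integral_smul_comp_sub_smul ρ h t x
  hD.differentiableAt

theorem fderiv_integral_smul_comp_sub_smul_apply (ρ h : 𝓢(E, ℂ)) (t : ℝ) (x w : E) :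
    fderiv ℝ (fun x => ∫ u, ρ u • h (x - t • u)) x w =
      (1 : ℝ) • ∫ u, ρ u • (∂_{w} h) (x - t • u) := by
  obtain ⟨D, hD, hDw⟩ := exists_hasFDerivAt_integral_smul_comp_sub_smul ρ h t x
  rw [hD.fderiv, hDw, one_smul]

theorem contDiff_integral_smul_comp_sub_smul (ρ h : 𝓢(E, ℂ)) (t : ℝ) :
    ContDiff ℝ ∞ fun x => ∫ u, ρ u • h (x - t • u) :=
  contDiff_of_fderiv_eq_smul_lineDerivOp (T := fun h x => ∫ u, ρ u • h (x - t • u))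
    (differentiable_integral_smul_comp_sub_smul ρ · t)
    (fderiv_integral_smul_comp_sub_smul_apply ρ · t) h

theorem iteratedFDeriv_integral_smul_comp_sub_smul_apply (ρ h : 𝓢(E, ℂ)) (t : ℝ) {l : ℕ} (x : E)
    (v : Fin l → E) : iteratedFDeriv ℝ l (fun x => ∫ u, ρ u • h (x - t • u)) x v =
      ∫ u, ρ u • (∂^{v} h) (x - t • u) := by
  simpa only [one_pow, one_smul] using
    iteratedFDeriv_apply_eq_smul_iteratedLineDerivOp (T := fun h x => ∫ u, ρ u • h (x - t • u))
      (contDiff_integral_smul_comp_sub_smul ρ · t)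
      (fderiv_integral_smul_comp_sub_smul_apply ρ · t) h x v

theorem weight_mul_norm_integral_smul_comp_sub_smul_le (ρ h : 𝓢(E, ℂ)) (t : ℝ) (k : ℕ) (x : E) :
    (1 + ‖x‖) ^ k * ‖∫ u, ρ u • h (x - t • u)‖ ≤
      absMoment ρ k * ((1 + |t|) ^ k * ‖weightedJet k h‖) := by
  have h_bound (u : E) : ‖((1 + ‖x‖) ^ k : ℝ) • h (x - t • u)‖ ≤
      (1 + ‖u‖) ^ k * ((1 + |t|) ^ k * ‖weightedJet k h‖) :=
    calc ‖((1 + ‖x‖) ^ k : ℝ) • h (x - t • u)‖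
        = (1 + ‖x‖) ^ k * ‖iteratedFDeriv ℝ 0 h (x - t • u)‖ := by
          rw [norm_smul, Real.norm_of_nonneg (by positivity), norm_iteratedFDeriv_zero]
      _ ≤ (1 + ‖t • u‖) ^ k * ‖weightedJet k h‖ :=
          weight_mul_norm_iteratedFDeriv_sub_le (Nat.zero_le k) h x (t • u)
      _ ≤ (1 + ‖u‖) ^ k * ((1 + |t|) ^ k * ‖weightedJet k h‖) := by
          rw [← mul_assoc]; gcongr; exact one_add_norm_smul_pow_le t u k
  refine le_of_eq_of_le ?_ (norm_integral_smul_le_of_norm_le ρ h_bound)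
  simp only [smul_comm (ρ _)]
  rw [integral_smul, norm_smul, Real.norm_of_nonneg (by positivity)]

/-- The average `x ↦ ∫ ρ(u) h(x - t u) du` of the translates of `h`, that is, the convolution of
`h` with the rescaled `ρ_t` if `t > 0`. -/
noncomputable def smear (ρ : 𝓢(E, ℂ)) (t : ℝ) (h : 𝓢(E, ℂ)) : 𝓢(E, ℂ) where
  toFun x := ∫ u, ρ u • h (x - t • u)
  smooth' := contDiff_integral_smul_comp_sub_smul ρ h t
  decay' k l := by
    refine ⟨absMoment ρ k * ((1 + |t|) ^ k * ‖weightedJet (k + l) h‖), fun x => ?_⟩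
    have h_nonneg := absMoment_nonneg ρ k
    have h_weight : ‖x‖ ^ k ≤ (1 + ‖x‖) ^ k := by gcongr; exact le_add_of_nonneg_left zero_le_one
    refine (mul_le_mul_of_nonneg_right h_weight (norm_nonneg _)).trans ?_
    rw [← le_div_iff₀' (by positivity)]
    refine ContinuousMultilinearMap.opNorm_le_bound (by positivity) fun v => ?_
    rw [iteratedFDeriv_integral_smul_comp_sub_smul_apply, div_mul_eq_mul_div,
      le_div_iff₀' (by positivity), mul_assoc, mul_assoc]
    refine (weight_mul_norm_integral_smul_comp_sub_smul_le ρ _ t k x).trans ?_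
    gcongr
    exact norm_weightedJet_iteratedLineDerivOp_le k h v

theorem smear_apply (ρ : 𝓢(E, ℂ)) (t : ℝ) (h : 𝓢(E, ℂ)) (x : E) :
    smear ρ t h x = ∫ u, ρ u • h (x - t • u) := rfl

theorem smear_compSubConstCLM (ρ : 𝓢(E, ℂ)) (t : ℝ) (h : 𝓢(E, ℂ)) (a : E) :
    smear ρ t (compSubConstCLM ℂ a h) = compSubConstCLM ℂ a (smear ρ t h) := by
  ext x
  simp only [compSubConstCLM_apply, smear_apply, sub_right_comm]

end Averaging

section AverageFunctional

variable {E : Type*} [NormedAddCommGroup E] [NormedSpace ℝ E]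

theorem norm_translationOrbit_weightedJet_smul_le (k : ℕ) (h : 𝓢(E, ℂ)) (t : ℝ) (u : E) :
    ‖translationOrbit (weightedJet k) h (t • u)‖ ≤
      (1 + ‖u‖) ^ k * ((1 + |t|) ^ k * ‖weightedJet k h‖) := by
  rw [← mul_assoc]
  refine (norm_weightedJet_compSubConstCLM_le k h (t • u)).trans ?_
  gcongr
  exact one_add_norm_smul_pow_le t u k

variable [FiniteDimensional ℝ E] [MeasureSpace E] [BorelSpace E]
  [(volume : Measure E).IsAddHaarMeasure]

theorem integrable_smul_translationOrbit_weightedJet (ρ : 𝓢(E, ℂ)) (t : ℝ) (k : ℕ)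
    (h : 𝓢(E, ℂ)) : Integrable fun u => ρ u • translationOrbit (weightedJet k) h (t • u) :=
  integrable_smul_of_norm_le ρ
    ((contDiff_translationOrbit_weightedJet k h).continuous.comp (by fun_prop))
    (norm_translationOrbit_weightedJet_smul_le k h t)

theorem weightedJet_smear (ρ : 𝓢(E, ℂ)) (t : ℝ) (k : ℕ) (h : 𝓢(E, ℂ)) :
    weightedJet k (smear ρ t h) = ∫ u, ρ u • translationOrbit (weightedJet k) h (t • u) := by
  refine funext fun l => BoundedContinuousFunction.ext fun x => ?_
  ext v
  calc weightedJet k (smear ρ t h) l x v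
      = ∫ u, ρ u • WeightedJets.eval l x v (translationOrbit (weightedJet k) h (t • u)) := by
        simp only [WeightedJets.eval_apply, translationOrbit, weightedJet_apply,
          smul_apply, iteratedFDeriv_compSubConstCLM, smul_comm (ρ _)]
        rw [integral_smul]
        congr 1
        refine (iteratedFDeriv_integral_smul_comp_sub_smul_apply ρ h t x v).trans ?_
        simp only [iteratedLineDerivOp_eq_iteratedFDeriv]
    _ = WeightedJets.eval l x v (∫ u, ρ u • translationOrbit (weightedJet k) h (t • u)) := by
        rw [← ContinuousLinearMap.integral_comp_comm _
          (integrable_smul_translationOrbit_weightedJet ρ t k h)]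
        simp only [map_smul]

theorem norm_weightedJet_smear_le (ρ : 𝓢(E, ℂ)) (t : ℝ) (k : ℕ) (h : 𝓢(E, ℂ)) :
    ‖weightedJet k (smear ρ t h)‖ ≤ absMoment ρ k * ((1 + |t|) ^ k * ‖weightedJet k h‖) := by
  rw [weightedJet_smear]
  exact norm_integral_smul_le_of_norm_le ρ (norm_translationOrbit_weightedJet_smul_le k h t)

theorem map_smear (L : 𝓢(E, ℂ) →L[ℂ] ℂ) (ρ : 𝓢(E, ℂ)) (t : ℝ) (h : 𝓢(E, ℂ)) :
    L (smear ρ t h) = ∫ u, ρ u * L (compSubConstCLM ℂ (t • u) h) := by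
  obtain ⟨k, M, hM⟩ := exists_eq_comp_weightedJet L
  rw [hM, weightedJet_smear, ← ContinuousLinearMap.integral_comp_comm _
    (integrable_smul_translationOrbit_weightedJet ρ t k h)]
  simp only [map_smul, translationOrbit, ← hM, smul_eq_mul]

theorem smear_comm (ρ σ : 𝓢(E, ℂ)) (s t : ℝ) (h : 𝓢(E, ℂ)) :
    smear ρ s (smear σ t h) = smear σ t (smear ρ s h) := by
  have h_int (x : E) : Integrable
      (Function.uncurry fun u v => ρ u • σ v • h (x - s • u - t • v)) (volume.prod volume) := by
    refine ((ρ.integrable.mul_prod σ.integrable).norm.mul_const ‖weightedJet 0 h‖).mono' ?_ ?_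
    · exact Continuous.aestronglyMeasurable (by fun_prop)
    · refine .of_forall fun ⟨u, v⟩ => ?_
      simp only [Function.uncurry_apply_pair, norm_smul, norm_mul, mul_assoc]
      gcongr
      simpa using norm_iteratedFDeriv_le (Nat.zero_le 0) h (x - s • u - t • v)
  ext x
  simp only [smear_apply, ← integral_smul]
  rw [integral_integral_swap (h_int x)]
  simp only [smul_comm (ρ _), sub_right_comm]

end AverageFunctional

section Mollifiers

theorem norm_sub_taylor_le {E V : Type*} [NormedAddCommGroup E] [NormedSpace ℝ E]
    [NormedAddCommGroup V] [NormedSpace ℝ V] [CompleteSpace V] {F : E → V} {n : ℕ} {M : ℝ}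
    (hF : ContDiff ℝ (n + 1) F) (x y : E)
    (hM : ∀ t ∈ Set.Icc (0 : ℝ) 1, ‖iteratedFDeriv ℝ (n + 1) F (x + t • y)‖ ≤ M) :
    ‖F (x + y) - ∑ j ∈ Finset.range (n + 1),
      (j.factorial : ℝ)⁻¹ • iteratedFDeriv ℝ j F x (fun _ => y)‖ ≤ M * ‖y‖ ^ (n + 1) := by
  have h_integrand (t : ℝ) (ht : t ∈ Set.uIoc (0 : ℝ) 1) :
      ‖(1 - t) ^ n • iteratedFDeriv ℝ (n + 1) F (x + t • y) (fun _ => y)‖ ≤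
        M * ‖y‖ ^ (n + 1) := by
    rw [Set.uIoc_of_le zero_le_one] at ht
    have h_weight : ‖(1 - t) ^ n‖ ≤ 1 := by
      rw [Real.norm_of_nonneg (pow_nonneg (sub_nonneg.2 ht.2) n)]
      exact pow_le_one₀ (sub_nonneg.2 ht.2) (sub_le_self 1 ht.1.le)
    calc ‖(1 - t) ^ n • iteratedFDeriv ℝ (n + 1) F (x + t • y) (fun _ => y)‖
        ≤ 1 * (M * ∏ _i : Fin (n + 1), ‖y‖) := by
          rw [norm_smul]
          gcongr
          exact ContinuousMultilinearMap.le_of_opNorm_le (hM t (Set.Ioc_subset_Icc_self ht)) _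
      _ = M * ‖y‖ ^ (n + 1) := by rw [one_mul, Fin.prod_const]
  have h_integral := intervalIntegral.norm_integral_le_of_norm_le_const h_integrand
  rw [sub_zero, abs_one, mul_one] at h_integral
  rw [map_add_eq_sum_add_integral_iteratedFDeriv fun t _ => hF.contDiffAt, add_sub_cancel_left,
    norm_smul, norm_inv, Real.norm_natCast]
  refine (mul_le_of_le_one_left (norm_nonneg _) ?_).trans h_integral
  exact inv_le_one_of_one_le₀ (mod_cast n.factorial_pos)

theorem norm_translationOrbit_weightedJet_sub_taylor_le {E : Type*} [NormedAddCommGroup E]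
    [NormedSpace ℝ E] [FiniteDimensional ℝ E] (k n : ℕ) (h : 𝓢(E, ℂ)) (a : E) :
    ‖translationOrbit (weightedJet k) h a - ∑ j ∈ Finset.range (n + 1),
      (j.factorial : ℝ)⁻¹ • iteratedFDeriv ℝ j (translationOrbit (weightedJet k) h) 0 fun _ => a‖ ≤
        (1 + ‖a‖) ^ k * ‖weightedJet (k + (n + 1)) h‖ * ‖a‖ ^ (n + 1) := by
  have h_deriv (s : ℝ) (hs : s ∈ Set.Icc (0 : ℝ) 1) :
      ‖iteratedFDeriv ℝ (n + 1) (translationOrbit (weightedJet k) h) (0 + s • a)‖ ≤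
        (1 + ‖a‖) ^ k * ‖weightedJet (k + (n + 1)) h‖ := by
    rw [zero_add]
    refine (norm_iteratedFDeriv_translationOrbit_weightedJet_le k h (n + 1) _).trans ?_
    gcongr
    exact norm_smul_le_of_mem_Icc hs a
  simpa only [zero_add] using norm_sub_taylor_le
    ((contDiff_translationOrbit_weightedJet k h).of_le (mod_cast le_top)) 0 a h_deriv

theorem integrable_smul_multilinear_apply {d j : ℕ} {V : Type*} [NormedAddCommGroup V]
    [NormedSpace ℂ V] (ρ : 𝓢(Fin d → ℝ, ℂ)) (M : (Fin d → ℝ) [×j]→L[ℝ] V) :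
    Integrable fun u => ρ u • M fun _ => u :=
  integrable_smul_of_norm_le (k := j) (C := ‖M‖) ρ (M.cont.comp (by fun_prop)) fun u =>
    calc ‖M fun _ => u‖ ≤ ‖M‖ * ‖u‖ ^ j := by simpa using M.le_opNorm fun _ => u
      _ ≤ (1 + ‖u‖) ^ j * ‖M‖ := by
        rw [mul_comm]; gcongr; exact le_add_of_nonneg_left zero_le_one

variable {d : ℕ} {ρ : 𝓢(Fin d → ℝ, ℂ)} {V : Type*} [NormedAddCommGroup V] [NormedSpace ℂ V]
  [CompleteSpace V]

theorem IsMollifier.integral_mul_prod_eq_zero (hρ : IsMollifier ρ) {j : ℕ} (hj : j ≠ 0)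
    (r : Fin j → Fin d) : ∫ u, ρ u * ∏ i, (u (r i) : ℂ) = 0 := by
  let α : Fin d → ℕ := fun c => (Finset.univ.filter fun i => r i = c).card
  have h_prod (u : Fin d → ℝ) : ∏ c, (u c : ℂ) ^ α c = ∏ i, (u (r i) : ℂ) := by
    rw [← Finset.prod_fiberwise' Finset.univ r fun c => (u c : ℂ)]
    simp only [Finset.prod_const, α]
  have hα : α ≠ 0 := fun h =>
    have i : Fin j := ⟨0, Nat.pos_of_ne_zero hj⟩
    have hi : i ∈ Finset.univ.filter fun i' => r i' = r i := by simp
    Finset.card_ne_zero_of_mem hi (congrFun h (r i))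
  simpa only [h_prod, mul_comm] using hρ.2 α hα

theorem IsMollifier.integral_smul_multilinear_apply_eq_zero (hρ : IsMollifier ρ) {j : ℕ}
    (hj : j ≠ 0) (M : (Fin d → ℝ) [×j]→L[ℝ] V) : ∫ u, ρ u • M (fun _ => u) = 0 := by
  have h_expand (u : Fin d → ℝ) : ρ u • M (fun _ => u) =
      ∑ r : Fin j → Fin d, (ρ u * ∏ i, (u (r i) : ℂ)) • M fun i => Pi.single (r i) 1 := by
    have h_basis : (fun _ : Fin j => u) = fun _ => ∑ c, u c • Pi.single c (1 : ℝ) :=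
      funext fun _ => pi_eq_sum_univ' u
    rw [h_basis, M.map_sum, Finset.smul_sum]
    refine Finset.sum_congr rfl fun r _ => ?_
    rw [M.map_smul_univ, mul_smul, ← Complex.ofReal_prod, Complex.coe_smul]
  have h_int (r : Fin j → Fin d) : Integrable fun u => ρ u * ∏ i, (u (r i) : ℂ) := by
    refine integrable_smul_of_norm_le (k := j) (C := 1) ρ (by fun_prop) fun u => ?_
    calc ‖∏ i, (u (r i) : ℂ)‖ ≤ ∏ _i : Fin j, (1 + ‖u‖) := by
          rw [norm_prod]
          gcongr with i
          rw [Complex.norm_real]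
          exact (norm_le_pi_norm u (r i)).trans (le_add_of_nonneg_left zero_le_one)
      _ = (1 + ‖u‖) ^ j * 1 := by rw [Fin.prod_const, mul_one]
  simp only [h_expand]
  rw [integral_finsetSum _ fun r _ => (h_int r).smul_const _]
  refine Finset.sum_eq_zero fun r _ => ?_
  rw [integral_smul_const, hρ.integral_mul_prod_eq_zero hj, zero_smul]

theorem IsMollifier.integral_smul_taylor (hρ : IsMollifier ρ)
    (M : ∀ j : ℕ, (Fin d → ℝ) [×j]→L[ℝ] V) (t : ℝ) (n : ℕ) :
    Integrable (fun u => ρ u • ∑ j ∈ Finset.range (n + 1), M j fun _ => t • u) ∧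
    ∫ u, ρ u • ∑ j ∈ Finset.range (n + 1), M j (fun _ => t • u) = M 0 0 := by
  let scaledM (j : ℕ) : (Fin d → ℝ) [×j]→L[ℝ] V :=
    (M j).compContinuousLinearMap fun _ => t • ContinuousLinearMap.id ℝ _
  have h_term (j : ℕ) (u : Fin d → ℝ) : M j (fun _ => t • u) = scaledM j fun _ => u := rfl
  simp only [h_term, Finset.smul_sum]
  refine ⟨integrable_finsetSum _ fun j _ => integrable_smul_multilinear_apply ρ _, ?_⟩
  rw [integral_finsetSum _ fun j _ => integrable_smul_multilinear_apply ρ _,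
    Finset.sum_range_succ', Finset.sum_eq_zero fun j _ =>
      hρ.integral_smul_multilinear_apply_eq_zero j.succ_ne_zero _, zero_add]
  have h_const (u : Fin d → ℝ) : (scaledM 0 fun _ => u) = M 0 0 :=
    congrArg (M 0) (Subsingleton.elim _ _)
  simp only [h_const]
  rw [integral_smul_const, hρ.1, one_smul]

theorem IsMollifier.norm_weightedJet_smear_sub_le (hρ : IsMollifier ρ) (t : ℝ) (k n : ℕ)
    (h : 𝓢(Fin d → ℝ, ℂ)) : ‖weightedJet k (smear ρ t h - h)‖ ≤
      absMoment ρ (k + (n + 1)) *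
        ((1 + |t|) ^ k * |t| ^ (n + 1) * ‖weightedJet (k + (n + 1)) h‖) := by
  set F := translationOrbit (weightedJet k) h
  set D := fun j : ℕ => (j.factorial : ℝ)⁻¹ • iteratedFDeriv ℝ j F 0
  obtain ⟨h_int, h_taylor⟩ := hρ.integral_smul_taylor D t n
  have h_zero : D 0 0 = weightedJet k h := by
    simp [D, F, translationOrbit, SchwartzMap.compSubConstCLM_zero]
  have h_remainder (u : Fin d → ℝ) :
      ‖F (t • u) - ∑ j ∈ Finset.range (n + 1), D j fun _ => t • u‖ ≤
        (1 + ‖u‖) ^ (k + (n + 1)) *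
          ((1 + |t|) ^ k * |t| ^ (n + 1) * ‖weightedJet (k + (n + 1)) h‖) := by
    calc ‖F (t • u) - ∑ j ∈ Finset.range (n + 1), D j fun _ => t • u‖
        ≤ (1 + ‖t • u‖) ^ k * ‖weightedJet (k + (n + 1)) h‖ * ‖t • u‖ ^ (n + 1) :=
          norm_translationOrbit_weightedJet_sub_taylor_le k n h (t • u)
      _ ≤ (1 + ‖u‖) ^ k * (1 + |t|) ^ k * ‖weightedJet (k + (n + 1)) h‖ *
            (|t| ^ (n + 1) * (1 + ‖u‖) ^ (n + 1)) := by
          rw [norm_smul t u, mul_pow, ← norm_smul, Real.norm_eq_abs]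
          gcongr
          · exact one_add_norm_smul_pow_le t u k
          · exact le_add_of_nonneg_left zero_le_one
      _ = _ := by ring
  calc ‖weightedJet k (smear ρ t h - h)‖
      = ‖∫ u, ρ u • (F (t • u) - ∑ j ∈ Finset.range (n + 1), D j fun _ => t • u)‖ := by
        simp only [smul_sub]
        rw [integral_sub (integrable_smul_translationOrbit_weightedJet ρ t k h) h_int, h_taylor,
          h_zero, map_sub, weightedJet_smear]
    _ ≤ _ := norm_integral_smul_le_of_norm_le ρ h_remainder

end Mollifiers

section Rescalings

variable {d : ℕ}

theorem integral_mul_scaled {t : ℝ} (ht : 0 < t) (ρ f : (Fin d → ℝ) → ℂ) (v : Fin d → ℝ) :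
    ∫ u, f u * scaled ρ t (u - v) = ∫ u, ρ u * f (v + t • u) := by
  have h_dilate := Measure.integral_comp_smul (volume : Measure (Fin d → ℝ))
    (fun u => f (v + u) * scaled ρ t u) t
  have h_scaled (u : Fin d → ℝ) : scaled ρ t (t • u) = ((t ^ d : ℝ) : ℂ)⁻¹ * ρ u := by
    rw [scaled, inv_smul_smul₀ ht.ne', zpow_neg, zpow_natCast, Complex.ofReal_inv]
  calc ∫ u, f u * scaled ρ t (u - v) = ∫ u, f (v + u) * scaled ρ t u := by
        rw [← integral_add_left_eq_self _ v]
        simp only [add_sub_cancel_left]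
    _ = t ^ d • ∫ u, f (v + t • u) * scaled ρ t (t • u) := by
        rw [h_dilate, Module.finrank_fin_fun, abs_of_pos (by positivity),
          smul_inv_smul₀ (by positivity)]
    _ = ∫ u, ρ u * f (v + t • u) := by
        rw [← integral_smul]
        refine integral_congr_ae (.of_forall fun u => ?_)
        have ht' : ((t ^ d : ℝ) : ℂ) ≠ 0 := Complex.ofReal_ne_zero.2 (by positivity)
        simp only [h_scaled, Complex.real_smul]
        field_simp

variable {t : ℝ} {ρ : 𝓢(Fin d → ℝ, ℂ)} {P : (Fin d → ℝ) → 𝓢(Fin d → ℝ, ℂ)}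

theorem eq_compSubConstCLM_of_scaled (hP : ∀ ξ w, P ξ w = scaled ρ t (ξ - w)) (ξ : Fin d → ℝ) :
    P ξ = compSubConstCLM ℂ ξ (P 0) := by
  ext w
  rw [compSubConstCLM_apply, hP, hP, sub_sub_eq_add_sub, zero_add]

theorem smear_one_eq_smear_neg_of_scaled (ht : 0 < t) (hP : ∀ ξ w, P ξ w = scaled ρ t (ξ - w))
    (f : 𝓢(Fin d → ℝ, ℂ)) : smear f 1 (P 0) = smear ρ (-t) f := by
  ext v
  simp only [smear_apply, smul_eq_mul, hP, one_smul, neg_smul, sub_neg_eq_add, zero_sub, neg_sub]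
  exact integral_mul_scaled ht ρ f v

theorem integral_map_scaled_mul (L : 𝓢(Fin d → ℝ, ℂ) →L[ℂ] ℂ) (ht : 0 < t)
    (hP : ∀ ξ w, P ξ w = scaled ρ t (ξ - w)) (f : 𝓢(Fin d → ℝ, ℂ)) :
    ∫ ξ, L (P ξ) * f ξ = L (smear ρ (-t) f) := by
  rw [← smear_one_eq_smear_neg_of_scaled ht hP, map_smear]
  simp only [one_smul, ← eq_compSubConstCLM_of_scaled hP, mul_comm]

theorem integral_map_scaled_sub_mul_scaled (L : 𝓢(Fin d → ℝ, ℂ) →L[ℂ] ℂ) (ht : 0 < t)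
    (hP : ∀ ξ w, P ξ w = scaled ρ t (ξ - w)) {σ : 𝓢(Fin d → ℝ, ℂ)} {r : ℝ}
    {R : (Fin d → ℝ) → 𝓢(Fin d → ℝ, ℂ)} (hR : ∀ ξ w, R ξ w = scaled σ r (ξ - w))
    (x : Fin d → ℝ) :
    ∫ u, L (P (x - u)) * scaled σ r u = L (compSubConstCLM ℂ x (smear ρ (-t) (R 0))) :=
  calc ∫ u, L (P (x - u)) * scaled σ r u = ∫ ξ, L (P ξ) * R x ξ := by
        rw [← integral_sub_left_eq_self _ _ x]
        simp only [hR, sub_sub_cancel]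
    _ = L (compSubConstCLM ℂ x (smear ρ (-t) (R 0))) := by
        rw [integral_map_scaled_mul L ht hP, eq_compSubConstCLM_of_scaled hR,
          smear_compSubConstCLM]

theorem norm_weightedJet_le_of_scaled {h : 𝓢(Fin d → ℝ, ℂ)} (ht : t ∈ Set.Ioc (0 : ℝ) 1)
    (hh : ∀ w, h w = scaled ρ t (-w)) (k : ℕ) :
    ‖weightedJet k h‖ ≤ ‖weightedJet k ρ‖ * t ^ (-((d + k : ℕ) : ℤ)) := by
  obtain ⟨ht0, ht1⟩ := ht
  have h_inv : 1 ≤ t⁻¹ := (one_le_inv₀ ht0).2 ht1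
  have h_eq : ⇑h = ((t⁻¹ ^ d : ℝ) : ℂ) • fun z => ρ ((-t⁻¹) • z) := by
    ext z
    simp [hh, scaled]
  refine (norm_weightedJet_le_iff (by positivity)).2 fun l hl x => ?_
  have h_deriv : ‖iteratedFDeriv ℝ l h x‖ =
      t⁻¹ ^ d * (t⁻¹ ^ l * ‖iteratedFDeriv ℝ l ρ ((-t⁻¹) • x)‖) := by
    have h_smooth : ContDiffAt ℝ l (fun z => ρ ((-t⁻¹) • z)) x :=
      ((ρ.smooth l).comp (contDiff_const_smul (-t⁻¹))).contDiffAt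
    rw [h_eq, iteratedFDeriv_const_smul_apply h_smooth,
      iteratedFDeriv_comp_const_smul _ (ρ.smooth l), norm_smul, norm_smul, norm_pow, norm_neg,
      Complex.norm_real, Real.norm_of_nonneg (by positivity), Real.norm_of_nonneg (by positivity)]
  have h_weight : 1 + ‖x‖ ≤ 1 + ‖(-t⁻¹) • x‖ := by
    rw [norm_smul, norm_neg, Real.norm_of_nonneg (by positivity)]
    gcongr
    exact le_mul_of_one_le_left (norm_nonneg x) h_inv
  calc (1 + ‖x‖) ^ k * ‖iteratedFDeriv ℝ l h x‖
      ≤ (1 + ‖(-t⁻¹) • x‖) ^ k *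
          (t⁻¹ ^ d * (t⁻¹ ^ k * ‖iteratedFDeriv ℝ l ρ ((-t⁻¹) • x)‖)) := by rw [h_deriv]; gcongr
    _ = (1 + ‖(-t⁻¹) • x‖) ^ k * ‖iteratedFDeriv ℝ l ρ ((-t⁻¹) • x)‖ * t⁻¹ ^ (d + k) := by ring
    _ ≤ ‖weightedJet k ρ‖ * t ^ (-((d + k : ℕ) : ℤ)) := by
        rw [zpow_neg, zpow_natCast, ← inv_pow]
        gcongr
        exact weight_mul_norm_iteratedFDeriv_le le_rfl hl ρ _

end Rescalings

section BilinearOrbits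

variable {E F G V W X : Type*} [NormedAddCommGroup E] [NormedSpace ℝ E] [FiniteDimensional ℝ E]
  [NormedAddCommGroup F] [NormedSpace ℝ F] [FiniteDimensional ℝ F]
  [NormedAddCommGroup G] [NormedSpace ℝ G]
  [NormedAddCommGroup V] [NormedSpace ℂ V] [NormedSpace ℝ V] [IsScalarTower ℝ ℂ V]
  [NormedAddCommGroup W] [NormedSpace ℂ W] [NormedSpace ℝ W] [IsScalarTower ℝ ℂ W]
  [NormedAddCommGroup X] [NormedSpace ℝ X] {A : 𝓢(F, ℂ) →ₗ[ℂ] V} {B : 𝓢(E, ℂ) →ₗ[ℂ] W} {k : ℕ}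

theorem contDiff_translationOrbit_comp (hB : ∀ h, ‖B h‖ ≤ ‖weightedJet k h‖) (h : 𝓢(E, ℂ))
    (π : G →L[ℝ] E) : ContDiff ℝ ∞ fun z => translationOrbit B h (π z) :=
  (contDiff_translationOrbit zero_le_one (fun h => (hB h).trans_eq (one_mul _).symm) h).comp
    π.contDiff

theorem norm_iteratedFDeriv_translationOrbit_comp_le (hB : ∀ h, ‖B h‖ ≤ ‖weightedJet k h‖)
    (h : 𝓢(E, ℂ)) {π : G →L[ℝ] E} (hπ : ‖π‖ ≤ 1) {i l : ℕ} (hi : i ≤ l) (z : G) :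
    ‖iteratedFDeriv ℝ i (fun z => translationOrbit B h (π z)) z‖ ≤
      (1 + ‖z‖) ^ k * ‖weightedJet (k + l) h‖ := by
  have hB' (h : 𝓢(E, ℂ)) : ‖B h‖ ≤ 1 * ‖weightedJet k h‖ := (hB h).trans_eq (one_mul _).symm
  change ‖iteratedFDeriv ℝ i (translationOrbit B h ∘ π) z‖ ≤ _
  rw [π.iteratedFDeriv_comp_right (contDiff_translationOrbit zero_le_one hB' h) z
    (mod_cast le_top)]
  calc ‖(iteratedFDeriv ℝ i (translationOrbit B h) (π z)).compContinuousLinearMap fun _ => π‖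
      ≤ ‖iteratedFDeriv ℝ i (translationOrbit B h) (π z)‖ * ∏ _j : Fin i, ‖π‖ :=
        ContinuousMultilinearMap.norm_compContinuousLinearMap_le _ _
    _ ≤ ‖iteratedFDeriv ℝ i (translationOrbit B h) (π z)‖ :=
        mul_le_of_le_one_right (norm_nonneg _)
          (Finset.prod_le_one (fun _ _ => norm_nonneg π) fun _ _ => hπ)
    _ ≤ 1 * ((1 + ‖π z‖) ^ k * ‖weightedJet (k + i) h‖) :=
        norm_iteratedFDeriv_translationOrbit_le zero_le_one hB' h i (π z)
    _ ≤ (1 + ‖z‖) ^ k * ‖weightedJet (k + l) h‖ := by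
        rw [one_mul]
        gcongr
        · simpa only [one_mul] using π.le_of_opNorm_le hπ z
        · exact norm_weightedJet_mono (by gcongr) h

theorem contDiff_bilinear_translationOrbit (M : V →L[ℝ] W →L[ℝ] X)
    (hA : ∀ h, ‖A h‖ ≤ ‖weightedJet k h‖) (hB : ∀ h, ‖B h‖ ≤ ‖weightedJet k h‖)
    (ψ : 𝓢(F, ℂ)) (γ : 𝓢(E, ℂ)) :
    ContDiff ℝ ∞ fun z : E × F => M (translationOrbit A ψ z.2) (translationOrbit B γ z.1) :=
  (M.contDiff.comp (contDiff_translationOrbit_comp hA ψ (ContinuousLinearMap.snd ℝ E F))).clm_apply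
    (contDiff_translationOrbit_comp hB γ (ContinuousLinearMap.fst ℝ E F))

theorem norm_iteratedFDeriv_bilinear_translationOrbit_le (M : V →L[ℝ] W →L[ℝ] X)
    (hA : ∀ h, ‖A h‖ ≤ ‖weightedJet k h‖) (hB : ∀ h, ‖B h‖ ≤ ‖weightedJet k h‖)
    (ψ : 𝓢(F, ℂ)) (γ : 𝓢(E, ℂ)) (l : ℕ) (z : E × F) :
    ‖iteratedFDeriv ℝ l
        (fun z : E × F => M (translationOrbit A ψ z.2) (translationOrbit B γ z.1)) z‖ ≤
      ‖M‖ * 2 ^ l * (1 + ‖z‖) ^ (2 * k) * ‖weightedJet (k + l) ψ‖ * ‖weightedJet (k + l) γ‖ := by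
  have hψ := contDiff_translationOrbit_comp hA ψ (ContinuousLinearMap.snd ℝ E F)
  have hγ := contDiff_translationOrbit_comp hB γ (ContinuousLinearMap.fst ℝ E F)
  have hl : (l : ℕ∞ω) ≤ ∞ := mod_cast le_top
  refine (M.norm_iteratedFDeriv_le_of_bilinear hψ hγ z hl).trans ?_
  calc _ ≤ ‖M‖ * ∑ i ∈ Finset.range (l + 1), (l.choose i : ℝ) *
          ((1 + ‖z‖) ^ k * ‖weightedJet (k + l) ψ‖) *
          ((1 + ‖z‖) ^ k * ‖weightedJet (k + l) γ‖) := by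
        gcongr with i hi
        · exact norm_iteratedFDeriv_translationOrbit_comp_le hA ψ
            (π := ContinuousLinearMap.snd ℝ E F) (ContinuousLinearMap.norm_snd_le ..)
            (Finset.mem_range_succ_iff.1 hi) z
        · exact norm_iteratedFDeriv_translationOrbit_comp_le hB γ
            (π := ContinuousLinearMap.fst ℝ E F) (ContinuousLinearMap.norm_fst_le ..)
            (Nat.sub_le l i) z
    _ = _ := by
        rw [← Finset.sum_mul, ← Finset.sum_mul, ← Nat.cast_sum, Nat.sum_range_choose]
        push_cast
        ring

end BilinearOrbits

section Kernel

variable {E F : Type*} [NormedAddCommGroup E] [NormedSpace ℝ E]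
  [NormedAddCommGroup F] [NormedSpace ℝ F]

theorem exists_apply_apply_eq_weightedJet (Λ : 𝓢(F, ℂ) →L[ℂ] (𝓢(E, ℂ) →L[ℂ] ℂ)) :
    ∃ (k : ℕ) (M : LinearMap.range (weightedJet (E := F) k) →L[ℂ]
        LinearMap.range (weightedJet (E := E) k) →L[ℂ] ℂ),
      ∀ f g, Λ f g = M ((weightedJet k).rangeRestrict f) ((weightedJet k).rangeRestrict g) := by
  obtain ⟨k, C, -, hΛ⟩ := exists_norm_apply_apply_le Λ
  let jetF := LinearEquiv.ofInjective _ (weightedJet_injective (E := F) k)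
  let jetE := LinearEquiv.ofInjective _ (weightedJet_injective (E := E) k)
  let B : 𝓢(F, ℂ) →ₗ[ℂ] 𝓢(E, ℂ) →ₗ[ℂ] ℂ := ContinuousLinearMap.coeLM ℂ ∘ₗ Λ.toLinearMap
  refine ⟨k, (B.compl₁₂ jetF.symm.toLinearMap jetE.symm.toLinearMap).mkContinuous₂ C
    fun v w => ?_, fun f g => ?_⟩
  · obtain ⟨f, rfl⟩ := jetF.surjective v
    obtain ⟨g, rfl⟩ := jetE.surjective w
    simp only [LinearMap.compl₁₂_apply, LinearEquiv.coe_coe, LinearEquiv.symm_apply_apply]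
    exact hΛ f g
  · exact (congrArg₂ (fun f g => Λ f g) (jetF.symm_apply_apply f) (jetE.symm_apply_apply g)).symm

/-- The values of a separately continuous bilinear form on the pairs of translates of two Schwartz
functions. The first variable translates the second argument, in keeping with the convention that
the kernel `K(x, y)` of an operator integrates `f(y)` to a function of `x`. -/
noncomputable def translationKernel (Λ : 𝓢(F, ℂ) →L[ℂ] (𝓢(E, ℂ) →L[ℂ] ℂ)) (ψ : 𝓢(F, ℂ))
    (γ : 𝓢(E, ℂ)) (z : E × F) : ℂ :=
  Λ (compSubConstCLM ℂ z.2 ψ) (compSubConstCLM ℂ z.1 γ)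

theorem exists_contDiff_norm_iteratedFDeriv_translationKernel_le [FiniteDimensional ℝ E]
    [FiniteDimensional ℝ F] (Λ : 𝓢(F, ℂ) →L[ℂ] (𝓢(E, ℂ) →L[ℂ] ℂ)) :
    ∃ k, ∃ C ≥ 0, ∀ ψ γ, ContDiff ℝ ∞ (translationKernel Λ ψ γ) ∧
      ∀ l z, ‖iteratedFDeriv ℝ l (translationKernel Λ ψ γ) z‖ ≤
        C * 2 ^ l * (1 + ‖z‖) ^ (2 * k) * ‖weightedJet (k + l) ψ‖ * ‖weightedJet (k + l) γ‖ := by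
  obtain ⟨k, M, hM⟩ := exists_apply_apply_eq_weightedJet Λ
  have h_eq (ψ : 𝓢(F, ℂ)) (γ : 𝓢(E, ℂ)) : translationKernel Λ ψ γ = fun z =>
      M.bilinearRestrictScalars ℝ (translationOrbit (weightedJet k).rangeRestrict ψ z.2)
        (translationOrbit (weightedJet k).rangeRestrict γ z.1) := funext fun z => hM _ _
  have h_jetF (h : 𝓢(F, ℂ)) : ‖(weightedJet k).rangeRestrict h‖ ≤ ‖weightedJet k h‖ := le_rfl
  have h_jetE (h : 𝓢(E, ℂ)) : ‖(weightedJet k).rangeRestrict h‖ ≤ ‖weightedJet k h‖ := le_rfl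
  refine ⟨k, ‖M.bilinearRestrictScalars ℝ‖, norm_nonneg (M.bilinearRestrictScalars ℝ),
    fun ψ γ => ?_⟩
  rw [h_eq]
  exact ⟨contDiff_bilinear_translationOrbit _ h_jetF h_jetE ψ γ,
    norm_iteratedFDeriv_bilinear_translationOrbit_le _ h_jetF h_jetE ψ γ⟩

variable [FiniteDimensional ℝ E] [MeasureSpace E] [BorelSpace E]
  [(volume : Measure E).IsAddHaarMeasure] [FiniteDimensional ℝ F] [MeasureSpace F] [BorelSpace F]
  [(volume : Measure F).IsAddHaarMeasure]

theorem integral_integral_translationKernel_mul (Λ : 𝓢(F, ℂ) →L[ℂ] (𝓢(E, ℂ) →L[ℂ] ℂ))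
    (ψ f : 𝓢(F, ℂ)) (γ g : 𝓢(E, ℂ)) :
    ∫ x, (∫ y, translationKernel Λ ψ γ (x, y) * f y) * g x = Λ (smear f 1 ψ) (smear g 1 γ) := by
  have h_inner (x : E) : ∫ y, translationKernel Λ ψ γ (x, y) * f y =
      Λ (smear f 1 ψ) (compSubConstCLM ℂ x γ) := by
    let evalAt : 𝓢(F, ℂ) →L[ℂ] ℂ :=
      PointwiseConvergenceCLM.evalCLM (RingHom.id ℂ) ℂ (compSubConstCLM ℂ x γ) ∘L
        ContinuousLinearMap.toPointwiseConvergenceCLM ℂ (RingHom.id ℂ) _ _ ∘L Λ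
    refine Eq.trans ?_ (map_smear evalAt f 1 ψ).symm
    simp only [one_smul, mul_comm (f _)]
    rfl
  simp only [h_inner, map_smear (Λ (smear f 1 ψ)), one_smul, mul_comm]

theorem integral_integral_translationKernel_smear_mul_of_scaled {m n : ℕ}
    (Λ : 𝓢(Fin n → ℝ, ℂ) →L[ℂ] (𝓢(Fin m → ℝ, ℂ) →L[ℂ] ℂ)) {t r : ℝ}
    {ψ : 𝓢(Fin n → ℝ, ℂ)} {P : (Fin n → ℝ) → 𝓢(Fin n → ℝ, ℂ)} (ht : 0 < t)
    (hP : ∀ ξ w, P ξ w = scaled ψ t (ξ - w))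
    {φ : 𝓢(Fin m → ℝ, ℂ)} {R : (Fin m → ℝ) → 𝓢(Fin m → ℝ, ℂ)} (hr : 0 < r)
    (hR : ∀ ξ w, R ξ w = scaled φ r (ξ - w))
    (f : 𝓢(Fin n → ℝ, ℂ)) (ρ g : 𝓢(Fin m → ℝ, ℂ)) (τ : ℝ) :
    ∫ x, (∫ y, translationKernel Λ (P 0) (smear ρ τ (R 0)) (x, y) * f y) * g x =
      Λ (smear ψ (-t) f) (smear ρ τ (smear φ (-r) g)) := by
  rw [integral_integral_translationKernel_mul, smear_one_eq_smear_neg_of_scaled ht hP,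
    smear_comm, smear_one_eq_smear_neg_of_scaled hr hR]

end Kernel

section Nets

variable {E F : Type*} [NormedAddCommGroup E] [NormedSpace ℝ E] [NormedAddCommGroup F]
  [NormedSpace ℝ F]

/-- A net of Schwartz functions is moderate if every Schwartz norm grows at most like a power of
`ε⁻¹` as `ε → 0`. -/
def IsModerateNet (f : ℝ → 𝓢(E, ℂ)) : Prop :=
  ∀ k, ∃ N : ℕ, (fun ε => weightedJet k (f ε)) =O[𝓝[>] 0] fun ε => ε ^ (-(N : ℤ))

/-- A net of Schwartz functions is negligible if every Schwartz norm decays faster than every power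
of `ε` as `ε → 0`. -/
def IsNegligibleNet (f : ℝ → 𝓢(E, ℂ)) : Prop :=
  ∀ k p : ℕ, (fun ε => weightedJet k (f ε)) =O[𝓝[>] 0] fun ε => ε ^ p

theorem exists_forall_norm_le_of_isBigO {V W : Type*} [Norm V] [SeminormedAddCommGroup W]
    {f : ℝ → V} {g : ℝ → W} (h : f =O[𝓝[>] 0] g) :
    ∃ C > 0, ∃ η > 0, ∀ ε, 0 < ε → ε ≤ η → ‖f ε‖ ≤ C * ‖g ε‖ := by
  obtain ⟨C, hC, hfg⟩ := h.exists_pos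
  obtain ⟨η, hη, h_le⟩ := mem_nhdsGT_iff_exists_Ioc_subset.1 hfg.bound
  exact ⟨C, hC, η, hη, fun ε hε0 hεη => h_le ⟨hε0, hεη⟩⟩

theorem isBigO_rpow_pow {s : ℝ} (hs : 0 < s) {p n : ℕ} (hn : p / s ≤ n) :
    (fun ε : ℝ => (ε ^ s) ^ n) =O[𝓝[>] 0] fun ε => ε ^ p := by
  refine .of_bound 1 ?_
  filter_upwards [Ioc_mem_nhdsGT one_pos] with ε ⟨hε0, hε1⟩
  rw [one_mul, Real.norm_of_nonneg (by positivity), Real.norm_of_nonneg (by positivity),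
    ← Real.rpow_natCast, ← Real.rpow_mul hε0.le, ← Real.rpow_natCast ε p]
  exact Real.rpow_le_rpow_of_exponent_ge hε0 hε1 ((div_le_iff₀' hs).1 hn)

theorem isBigO_one_of_isBigO_rpow {s : ℝ} (hs : 0 < s) {t : ℝ → ℝ}
    (ht : t =O[𝓝[>] 0] fun ε => ε ^ s) : t =O[𝓝[>] 0] fun _ => (1 : ℝ) := by
  have h_pow := isBigO_rpow_pow hs (p := 0) (n := 1) (by simp)
  simp only [pow_one, pow_zero] at h_pow
  exact ht.trans h_pow

theorem isBigO_one_add_abs_pow {l : Filter ℝ} {t : ℝ → ℝ} (ht : t =O[l] fun _ => (1 : ℝ)) (k : ℕ) :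
    (fun ε => (1 + |t ε|) ^ k) =O[l] fun _ => (1 : ℝ) := by
  simpa only [one_pow, Real.norm_eq_abs] using
    ((Asymptotics.isBigO_refl (fun _ => (1 : ℝ)) l).add ht.norm_left).pow k

theorem isBigO_apply_apply (Λ : 𝓢(F, ℂ) →L[ℂ] (𝓢(E, ℂ) →L[ℂ] ℂ)) :
    ∃ k, ∀ (l : Filter ℝ) (f : ℝ → 𝓢(F, ℂ)) (g : ℝ → 𝓢(E, ℂ)), (fun ε => Λ (f ε) (g ε)) =O[l]
      fun ε => ‖weightedJet k (f ε)‖ * ‖weightedJet k (g ε)‖ := by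
  obtain ⟨k, C, -, hΛ⟩ := exists_norm_apply_apply_le Λ
  refine ⟨k, fun l f g => .of_bound C (.of_forall fun ε => ?_)⟩
  rw [norm_mul, norm_norm, norm_norm, ← mul_assoc]
  exact hΛ (f ε) (g ε)

theorem IsNegligibleNet.add {f g : ℝ → 𝓢(E, ℂ)} (hf : IsNegligibleNet f) (hg : IsNegligibleNet g) :
    IsNegligibleNet fun ε => f ε + g ε := fun k p => by
  simpa only [map_add] using (hf k p).add (hg k p)

theorem IsNegligibleNet.isBigO_one {f : ℝ → 𝓢(E, ℂ)} {f₀ : 𝓢(E, ℂ)}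
    (hf : IsNegligibleNet fun ε => f ε - f₀) (k : ℕ) :
    (fun ε => weightedJet k (f ε)) =O[𝓝[>] 0] fun _ => (1 : ℝ) := by
  have h_diff := hf k 0
  simp only [map_sub, pow_zero] at h_diff
  simpa only [sub_add_cancel] using
    h_diff.add (Asymptotics.isBigO_const_const (weightedJet k f₀) one_ne_zero (𝓝[>] 0))

theorem IsNegligibleNet.isBigO_apply_apply_sub (Λ : 𝓢(F, ℂ) →L[ℂ] (𝓢(E, ℂ) →L[ℂ] ℂ))
    {f : ℝ → 𝓢(F, ℂ)} {f₀ : 𝓢(F, ℂ)} {g : ℝ → 𝓢(E, ℂ)} {g₀ : 𝓢(E, ℂ)}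
    (hf : IsNegligibleNet fun ε => f ε - f₀) (hg : IsNegligibleNet fun ε => g ε - g₀) (p : ℕ) :
    (fun ε => Λ f₀ g₀ - Λ (f ε) (g ε)) =O[𝓝[>] 0] fun ε => ε ^ p := by
  obtain ⟨k, hΛ⟩ := isBigO_apply_apply Λ
  have h_left : (fun ε => Λ (f ε - f₀) (g ε)) =O[𝓝[>] 0] fun ε => ε ^ p := by
    simpa only [mul_one] using
      (hΛ _ _ _).trans ((hf k p).norm_left.mul (hg.isBigO_one k).norm_left)
  have h_right : (fun ε => Λ f₀ (g ε - g₀)) =O[𝓝[>] 0] fun ε => ε ^ p := by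
    simpa only [one_mul] using (hΛ _ (fun _ => f₀) _).trans
      ((Asymptotics.isBigO_const_const ‖weightedJet k f₀‖ one_ne_zero (𝓝[>] 0)).mul
        (hg k p).norm_left)
  refine (h_left.add h_right).neg_left.congr_left fun ε => ?_
  simp only [map_sub, _root_.sub_apply]
  ring

theorem exists_contDiff_mu_translationKernel_le [FiniteDimensional ℝ E] [FiniteDimensional ℝ F]
    (Λ : 𝓢(F, ℂ) →L[ℂ] (𝓢(E, ℂ) →L[ℂ] ℂ)) :
    ∃ (k : ℕ) (C : ℝ), ∀ ψ γ, ContDiff ℝ ∞ (translationKernel Λ ψ γ) ∧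
      ∀ l, mu (-((2 * k : ℕ) : ℤ)) l (translationKernel Λ ψ γ) ≤
        ENNReal.ofReal (C * 2 ^ l * (‖weightedJet (k + l) ψ‖ * ‖weightedJet (k + l) γ‖)) := by
  obtain ⟨k, C, hC0, hC⟩ := exists_contDiff_norm_iteratedFDeriv_translationKernel_le Λ
  refine ⟨k, C, fun ψ γ => ⟨(hC ψ γ).1, fun l => ?_⟩⟩
  refine iSup_le fun z => iSup₂_le fun i hi => ENNReal.ofReal_le_ofReal ?_
  rw [zpow_neg, zpow_natCast, inv_mul_le_iff₀ (by positivity)]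
  calc ‖iteratedFDeriv ℝ i (translationKernel Λ ψ γ) z‖
      ≤ C * 2 ^ i * (1 + ‖z‖) ^ (2 * k) * ‖weightedJet (k + i) ψ‖ * ‖weightedJet (k + i) γ‖ :=
        (hC ψ γ).2 i z
    _ ≤ C * 2 ^ l * (1 + ‖z‖) ^ (2 * k) * ‖weightedJet (k + l) ψ‖ * ‖weightedJet (k + l) γ‖ := by
        gcongr ?_ * ?_ * _ * ?_ * ?_
        · exact pow_le_pow_right₀ one_le_two hi
        · exact norm_weightedJet_mono (by gcongr) ψ
        · exact norm_weightedJet_mono (by gcongr) γ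
    _ = _ := by ring

theorem IsModerateNet.isEtauNet_translationKernel [FiniteDimensional ℝ E] [FiniteDimensional ℝ F]
    (Λ : 𝓢(F, ℂ) →L[ℂ] (𝓢(E, ℂ) →L[ℂ] ℂ)) {ψ : ℝ → 𝓢(F, ℂ)} {γ : ℝ → 𝓢(E, ℂ)}
    (hψ : IsModerateNet ψ) (hγ : IsModerateNet γ) {H : ℝ → E × F → ℂ}
    (hH : ∀ ε ∈ Set.Ioc (0 : ℝ) 1, H ε = translationKernel Λ (ψ ε) (γ ε)) : IsEtauNet H := by
  obtain ⟨k, C, hC⟩ := exists_contDiff_mu_translationKernel_le Λ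
  refine ⟨fun ε hε => hH ε hε ▸ ⟨(hC _ _).1, fun l => ⟨2 * k, ?_⟩⟩, fun l => ?_⟩
  · exact ((hC _ _).2 l).trans_lt ENNReal.ofReal_lt_top
  obtain ⟨M, hM⟩ := hψ (k + l)
  obtain ⟨N, hN⟩ := hγ (k + l)
  obtain ⟨D, hD, η, hη, h_le⟩ := exists_forall_norm_le_of_isBigO
    ((hM.norm_left.mul hN.norm_left).const_mul_left (C * 2 ^ l))
  refine ⟨2 * k, M + N, D, hD, min η 1, by positivity, fun ε hε0 hε => ?_⟩
  obtain ⟨hεη, hε1⟩ := le_min_iff.1 hε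
  simp only [hH ε ⟨hε0, hε1⟩]
  refine ((hC _ _).2 l).trans (ENNReal.ofReal_le_ofReal ?_)
  have h_bound := (le_abs_self _).trans (h_le ε hε0 hεη)
  rwa [← zpow_add₀ hε0.ne', ← neg_add, ← Nat.cast_add, Real.norm_of_nonneg (by positivity)]
    at h_bound

end Nets

section MollifierNets

variable {d : ℕ} {ρ : 𝓢(Fin d → ℝ, ℂ)}

theorem isModerateNet_of_scaled {P : ℝ → 𝓢(Fin d → ℝ, ℂ)}
    (hP : ∀ ε ∈ Set.Ioc (0 : ℝ) 1, ∀ w, P ε w = scaled ρ ε (-w)) : IsModerateNet P := by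
  refine fun k => ⟨d + k, .of_bound ‖weightedJet k ρ‖ ?_⟩
  filter_upwards [Ioc_mem_nhdsGT one_pos] with ε hε
  have h_norm : ‖ε ^ (-((d + k : ℕ) : ℤ))‖ = ε ^ (-((d + k : ℕ) : ℤ)) :=
    Real.norm_of_nonneg (zpow_nonneg hε.1.le _)
  rw [h_norm]
  exact norm_weightedJet_le_of_scaled hε (hP ε hε) k

theorem IsModerateNet.smear {E : Type*} [NormedAddCommGroup E] [NormedSpace ℝ E]
    [FiniteDimensional ℝ E] [MeasureSpace E] [BorelSpace E] [(volume : Measure E).IsAddHaarMeasure]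
    {f : ℝ → 𝓢(E, ℂ)} (hf : IsModerateNet f) (σ : 𝓢(E, ℂ)) {t : ℝ → ℝ}
    (ht : t =O[𝓝[>] 0] fun _ => (1 : ℝ)) : IsModerateNet fun ε => smear σ (t ε) (f ε) := by
  intro k
  obtain ⟨N, hN⟩ := hf k
  refine ⟨N, .trans (.of_bound (absMoment σ k) (.of_forall fun ε => ?_))
    (((isBigO_one_add_abs_pow ht k).mul hN.norm_left).congr_right fun ε => one_mul _)⟩
  rw [Real.norm_of_nonneg (by positivity)]
  exact norm_weightedJet_smear_le σ (t ε) k (f ε)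

theorem IsMollifier.isNegligibleNet_smear_sub (hρ : IsMollifier ρ) {s : ℝ} (hs : 0 < s)
    {t : ℝ → ℝ} (ht : t =O[𝓝[>] 0] fun ε => ε ^ s) {f : ℝ → 𝓢(Fin d → ℝ, ℂ)}
    (hf : ∀ k, (fun ε => weightedJet k (f ε)) =O[𝓝[>] 0] fun _ => (1 : ℝ)) :
    IsNegligibleNet fun ε => smear ρ (t ε) (f ε) - f ε := by
  intro k p
  obtain ⟨n, hn⟩ := exists_nat_ge (p / s)
  have h_pow : (fun ε => |t ε| ^ (n + 1)) =O[𝓝[>] 0] fun ε => ε ^ p :=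
    (ht.norm_left.pow (n + 1)).trans (isBigO_rpow_pow hs (hn.trans (by simp)))
  have h_weight := isBigO_one_add_abs_pow (isBigO_one_of_isBigO_rpow hs ht) k
  refine .trans (.of_bound (absMoment ρ (k + (n + 1))) (.of_forall fun ε => ?_))
    (((h_weight.mul h_pow).mul (hf (k + (n + 1))).norm_left).congr_right fun ε => by ring)
  rw [Real.norm_of_nonneg (by positivity)]
  exact hρ.norm_weightedJet_smear_sub_le (t ε) k n (f ε)

theorem IsMollifier.isNegligibleNet_smear_neg_sub (hρ : IsMollifier ρ) (h : 𝓢(Fin d → ℝ, ℂ)) :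
    IsNegligibleNet fun ε => smear ρ (-ε) h - h :=
  hρ.isNegligibleNet_smear_sub one_pos
    (by simpa only [Real.rpow_one] using (Asymptotics.isBigO_refl (fun ε : ℝ => ε) _).neg_left)
    fun k => Asymptotics.isBigO_const_const (weightedJet k h) (one_ne_zero (α := ℝ)) _

theorem IsMollifier.isNegligibleNet_smear_neg_rpow_smear_neg_sub (hρ : IsMollifier ρ) {s : ℝ}
    (hs : 0 < s) (h : 𝓢(Fin d → ℝ, ℂ)) :
    IsNegligibleNet fun ε => smear ρ (-(ε ^ s)) (smear ρ (-ε) h) - h := by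
  have h_smear := hρ.isNegligibleNet_smear_neg_sub h
  simpa only [sub_add_sub_cancel] using (hρ.isNegligibleNet_smear_sub hs
    (Asymptotics.isBigO_refl _ _).neg_left h_smear.isBigO_one).add h_smear

end MollifierNets

theorem stmt19_general (m n : ℕ)
    (Λ : SchwartzMap (Fin n → ℝ) ℂ →L[ℂ] (SchwartzMap (Fin m → ℝ) ℂ →L[ℂ] ℂ))
    (s : ℝ) (hs : 0 < s)
    (φ : SchwartzMap (Fin m → ℝ) ℂ) (hφ : IsMollifier φ)
    (ψ : SchwartzMap (Fin n → ℝ) ℂ) (hψ : IsMollifier ψ)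
    (Ψ : ℝ → (Fin n → ℝ) → SchwartzMap (Fin n → ℝ) ℂ)
    (hΨ : ∀ ε ∈ Set.Ioc (0 : ℝ) 1, ∀ y v, Ψ ε y v = scaled ⇑ψ ε (y - v))
    (Φ : ℝ → (Fin m → ℝ) → SchwartzMap (Fin m → ℝ) ℂ)
    (hΦ : ∀ t ∈ Set.Ioc (0 : ℝ) 1, ∀ ξ w, Φ t ξ w = scaled ⇑φ t (ξ - w))
    (H : ℝ → ((Fin m → ℝ) × (Fin n → ℝ)) → ℂ)
    (hH : ∀ ε ∈ Set.Ioc (0 : ℝ) 1, ∀ (x : Fin m → ℝ) (y : Fin n → ℝ),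
      H ε (x, y) = ∫ u : Fin m → ℝ, Λ (Ψ ε y) (Φ (ε ^ s) (x - u)) * scaled ⇑φ ε u) :
    IsEtauNet H ∧
    ∀ (f : SchwartzMap (Fin n → ℝ) ℂ) (g : SchwartzMap (Fin m → ℝ) ℂ) (p : ℕ),
      ∃ C > (0 : ℝ), ∃ η > (0 : ℝ), ∀ ε : ℝ, 0 < ε → ε ≤ η →
        ‖Λ f g - ∫ x : Fin m → ℝ, (∫ y : Fin n → ℝ, H ε (x, y) * f y) * g x‖
          ≤ C * ε ^ p := by
  have h_rpow (ε : ℝ) (hε : ε ∈ Set.Ioc (0 : ℝ) 1) : ε ^ s ∈ Set.Ioc (0 : ℝ) 1 :=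
    ⟨Real.rpow_pos_of_pos hε.1 s, Real.rpow_le_one hε.1.le hε.2 hs.le⟩
  have h_kernel (ε : ℝ) (hε : ε ∈ Set.Ioc (0 : ℝ) 1) :
      H ε = translationKernel Λ (Ψ ε 0) (smear φ (-(ε ^ s)) (Φ ε 0)) := by
    ext ⟨x, y⟩
    rw [hH ε hε, integral_map_scaled_sub_mul_scaled (Λ (Ψ ε y)) (h_rpow ε hε).1
      (hΦ _ (h_rpow ε hε)) (hΦ ε hε), eq_compSubConstCLM_of_scaled (hΨ ε hε) y, translationKernel]
  have hΨ_mod : IsModerateNet fun ε => Ψ ε 0 :=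
    isModerateNet_of_scaled fun ε hε w => by rw [hΨ ε hε, zero_sub]
  have hΦ_mod : IsModerateNet fun ε => Φ ε 0 :=
    isModerateNet_of_scaled fun ε hε w => by rw [hΦ ε hε, zero_sub]
  have h_scale : (fun ε : ℝ => -(ε ^ s)) =O[𝓝[>] 0] fun _ => (1 : ℝ) :=
    isBigO_one_of_isBigO_rpow hs (Asymptotics.isBigO_refl _ _).neg_left
  refine ⟨hΨ_mod.isEtauNet_translationKernel Λ (hΦ_mod.smear φ h_scale) h_kernel, fun f g p => ?_⟩
  have h_error := (hψ.isNegligibleNet_smear_neg_sub f).isBigO_apply_apply_sub Λ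
    (hφ.isNegligibleNet_smear_neg_rpow_smear_neg_sub hs g) p
  obtain ⟨C, hC, η, hη, h_le⟩ := exists_forall_norm_le_of_isBigO h_error
  refine ⟨C, hC, min η 1, by positivity, fun ε hε0 hε => ?_⟩
  obtain ⟨hεη, hε1⟩ := le_min_iff.1 hε
  rw [h_kernel ε ⟨hε0, hε1⟩, integral_integral_translationKernel_smear_mul_of_scaled Λ hε0
    (hΨ ε ⟨hε0, hε1⟩) hε0 (hΦ ε ⟨hε0, hε1⟩)]
  exact (h_le ε hε0 hεη).trans_eq (by rw [Real.norm_of_nonneg (by positivity)])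

/-- the kernel net associated to a continuous linear map
`Λ : 𝓢(ℝ^n) → 𝓢'(ℝ^m)` belongs to `E_τ(ℝ^{m+n})` and represents `Λ` in the
generalized distribution sense. -/
theorem stmt19 (m n : ℕ) (hm : 1 ≤ m) (hn : 1 ≤ n)
    (Λ : SchwartzMap (Fin n → ℝ) ℂ →L[ℂ] (SchwartzMap (Fin m → ℝ) ℂ →L[ℂ] ℂ))
    (s : ℝ) (hs : s ∈ Set.Ioo (0:ℝ) 1)
    (φ : SchwartzMap (Fin m → ℝ) ℂ) (hφ : IsMollifier φ)
    (ψ : SchwartzMap (Fin n → ℝ) ℂ) (hψ : IsMollifier ψ)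
    (Ψ : ℝ → (Fin n → ℝ) → SchwartzMap (Fin n → ℝ) ℂ)
    (hΨ : ∀ ε ∈ Set.Ioc (0:ℝ) 1, ∀ y v, Ψ ε y v = scaled ⇑ψ ε (y - v))
    (Φ : ℝ → (Fin m → ℝ) → SchwartzMap (Fin m → ℝ) ℂ)
    (hΦ : ∀ t ∈ Set.Ioc (0:ℝ) 1, ∀ ξ w, Φ t ξ w = scaled ⇑φ t (ξ - w))
    (H : ℝ → ((Fin m → ℝ) × (Fin n → ℝ)) → ℂ)
    (hH : ∀ ε ∈ Set.Ioc (0:ℝ) 1, ∀ (x : Fin m → ℝ) (y : Fin n → ℝ),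
      H ε (x, y) = ∫ u : Fin m → ℝ, Λ (Ψ ε y) (Φ (ε ^ s) (x - u)) * scaled ⇑φ ε u) :
    IsEtauNet H ∧
    ∀ (f : SchwartzMap (Fin n → ℝ) ℂ) (g : SchwartzMap (Fin m → ℝ) ℂ) (p : ℕ),
      ∃ C > (0:ℝ), ∃ η > (0:ℝ), ∀ ε : ℝ, 0 < ε → ε ≤ η →
        ‖Λ f g - ∫ x : Fin m → ℝ, (∫ y : Fin n → ℝ, H ε (x, y) * f y) * g x‖
          ≤ C * ε ^ p := by
  exact stmt19_general m n Λ s hs.1 φ hφ ψ hψ Ψ hΨ Φ hΦ H hH
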